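/- Let d ≥ 3. The connectedness locus C_d := {(c,a) ∈ ℂ^{d−1} : every critical point c_0 = 0, c_1, …, c_{d−2} of P_{c,a} has bounded forward orbit under P_{c,a}} is a compact and connected subset of ℂ^{d−1}. -/

import Mathlib

open Filter Topology MeasureTheory

/-- Elementary symmetric polynomial of degree `m` in the values of `c`. -/
noncomputable def sigmaE {n : ℕ} (c : Fin n → ℂ) (m : ℕ) : ℂ :=
  (Multiset.map c Finset.univ.val).esymm m

/-- The polynomial `P_{c,a}`. -/
noncomputable def Pca (d : ℕ) (c : Fin (d - 2) → ℂ) (a : ℂ) (z : ℂ) : ℂ :=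
  z ^ d / (d : ℂ) +
    (∑ j ∈ Finset.Icc 2 (d - 1), (-1 : ℂ) ^ (d - j) * sigmaE c (d - j) * z ^ j / (j : ℂ)) +
    a ^ d

/-- The critical points `c₀ = 0, c₁, …, c_{d-2}` of `P_{c,a}`. -/
noncomputable def critPt {d : ℕ} (c : Fin (d - 2) → ℂ) (i : Fin (d - 1)) : ℂ :=
  if h : (i : ℕ) = 0 then 0 else c ⟨(i : ℕ) - 1, by have := i.isLt; omega⟩

/-- The orbit of `z` under `P_{c,a}` is bounded. -/
def boundedOrbit (d : ℕ) (c : Fin (d - 2) → ℂ) (a z : ℂ) : Prop :=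
  Bornology.IsBounded (Set.range fun n => (Pca d c a)^[n] z)

/-- The Green function of `P_{c,a}`. -/
noncomputable def green (d : ℕ) (c : Fin (d - 2) → ℂ) (a z : ℂ) : ℝ :=
  limUnder atTop (fun n : ℕ => Real.log (max 1 ‖(Pca d c a)^[n] z‖) / (d : ℝ) ^ n)

/-- `G(c,a)`, the max of the Green function over the critical points. -/
noncomputable def Gmax (d : ℕ) (c : Fin (d - 2) → ℂ) (a : ℂ) : ℝ :=
  ⨆ i : Fin (d - 1), green d c a (critPt c i)

/-- The connectedness locus `C_d`. -/
def connLocus (d : ℕ) : Set ((Fin (d - 2) → ℂ) × ℂ) :=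
  {p | ∀ i : Fin (d - 1), boundedOrbit d p.1 p.2 (critPt p.1 i)}

/-- The filled-in Julia set of `P_{c,a}`. -/
def filledJulia (d : ℕ) (c : Fin (d - 2) → ℂ) (a : ℂ) : Set ℂ :=
  {z | boundedOrbit d c a z}

/-! Write `P` for the polynomial of degree `d` with parameter `q` and let `F_N : ℂ^{d-1} → ℂ^{d-1}`
send `q` to the `N`-th iterates under `P` of its critical points. The coordinates of `q` are
integral over the components of `F_N`; this is checked on valuation rings, where it comes down to
the fact that a polynomial vanishing at all its critical points has only one critical point. Hence
`F_N` is finite, so proper and open. If `R` is an escape radius, the locus is the decreasing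
intersection of the compact sets `F_N⁻¹(closedBall 0 R)`, and `F_{N+1}⁻¹(ball 0 2R)` lies between
two consecutive ones, so it suffices that the latter sets are connected.

Induct on the number of critical points that are free to move. Since `F_N` is proper and open, a
clopen piece of `F_N⁻¹(ball 0 2R)` maps onto the ball. In it, let the `N`-th iterate of the critical
point `0` be `R`, that of one free critical point run through the circle of radius `R`, and those of
the other ones be `0`. If the free critical point never met `0`, the external rays of `P^N` landing
at each would be constant in number and vary continuously, and the rays landing at `0` would also be
swept by the free critical point: a contradiction. So every piece contains a parameter for which the
free critical point is `0`, and these parameters form a family with one free critical point fewer.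
When none is left, `P` is `z ↦ z ^ d / d + a ^ d`, and the same sweeping, of `a` by the rays of
`P^{N-1}(z ^ d)`, yields `d ^ N` solutions of `F_N = R` in every piece, while there are at most
`d ^ N` of them altogether. -/

namespace CriticalFamily
open Polynomial

section Family

variable {ι A B : Type*} [CommRing A] [CommRing B]

/-- The critical points of the polynomial with parameter `q`: the origin, indexed by `none`, and
the coordinates `q (some i)`. The remaining coordinate `q none` is the parameter `a`. -/
def crit (q : Option ι → A) (j : Option ι) : A :=
  j.elim 0 fun i => q (some i)

lemma crit_comp (φ : A →+* B) (q : Option ι → A) (j : Option ι) :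
    crit (φ ∘ q) j = φ (crit q j) := by
  cases j <;> simp [crit]

lemma crit_smul (u : A) (q : Option ι → A) (j : Option ι) : crit (u • q) j = u * crit q j := by
  cases j <;> simp [crit]

variable [Fintype ι]

/-- The derivative of the polynomial with parameter `q`. The origin is a zero of multiplicity at
least `e + 1`; the excess `e` appears when critical points are merged with the origin. -/
noncomputable def critPoly (e : ℕ) (q : Option ι → A) : A[X] :=
  X ^ e * ∏ j, (X - C (crit q j))

lemma map_critPoly (φ : A →+* B) (e : ℕ) (q : Option ι → A) :
    (critPoly e q).map φ = critPoly e (φ ∘ q) := by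
  simp [critPoly, Polynomial.map_prod, crit_comp]

lemma critPoly_smul_comp (u : A) (e : ℕ) (q : Option ι → A) :
    (critPoly e (u • q)).comp (C u * X) = C (u ^ (e + Fintype.card ι + 1)) * critPoly e q := by
  have factor (j : Option ι) :
      (C u * X - C (crit (u • q) j) : A[X]) = C u * (X - C (crit q j)) := by
    rw [crit_smul, C_mul]; ring
  simp only [critPoly, mul_comp, X_pow_comp, prod_comp, sub_comp, X_comp, C_comp, factor,
    Finset.prod_mul_distrib, Finset.prod_const, Finset.card_univ, Fintype.card_option, C_pow]
  ring

lemma monic_critPoly (e : ℕ) (q : Option ι → A) : (critPoly e q).Monic :=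
  (monic_X_pow e).mul (monic_prod_of_monic _ _ fun _ _ => monic_X_sub_C _)

lemma natDegree_critPoly [Nontrivial A] (e : ℕ) (q : Option ι → A) :
    (critPoly e q).natDegree = e + Fintype.card ι + 1 := by
  rw [critPoly, (monic_X_pow e).natDegree_mul (monic_prod_of_monic _ _ fun _ _ => monic_X_sub_C _),
    natDegree_prod_of_monic _ _ fun _ _ => monic_X_sub_C _]
  simp [add_assoc]

variable [Algebra ℚ A] [Algebra ℚ B]

/-- The antiderivative of a polynomial that vanishes at `0`. -/
noncomputable def antiderivative : A[X] →ₗ[A] A[X] :=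
  lsum fun n => ((n + 1 : ℚ)⁻¹) • monomial (n + 1)

lemma antiderivative_monomial (n : ℕ) (c : A) :
    antiderivative (monomial n c) = (n + 1 : ℚ)⁻¹ • monomial (n + 1) c := by
  simp [antiderivative]

lemma coeff_antiderivative_succ (f : A[X]) (n : ℕ) :
    (antiderivative f).coeff (n + 1) = (n + 1 : ℚ)⁻¹ • f.coeff n := by
  simp only [antiderivative, lsum_apply, LinearMap.smul_apply, sum_def, finsetSum_coeff,
    coeff_smul, coeff_monomial, add_left_inj]
  rw [Finset.sum_eq_single n (fun m _ hm => by simp [hm])]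
  · simp
  · simp +contextual

lemma coeff_antiderivative_zero (f : A[X]) : (antiderivative f).coeff 0 = 0 := by
  simp [antiderivative, lsum_apply, sum_def, coeff_monomial]

lemma derivative_antiderivative (f : A[X]) : derivative (antiderivative f) = f := by
  ext n
  have : ((n : A) + 1) = algebraMap ℚ A (n + 1) := by simp
  rw [coeff_derivative, coeff_antiderivative_succ, this, mul_comm, ← Algebra.smul_def, smul_smul,
    mul_inv_cancel₀ (by positivity), one_smul]

lemma map_antiderivative (φ : A →+* B) (f : A[X]) :
    (antiderivative f).map φ = antiderivative (f.map φ) := by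
  ext (_ | n)
  · simp [coeff_antiderivative_zero]
  · simp [coeff_antiderivative_succ, map_rat_smul φ]

lemma antiderivative_comp_C_mul_X (u : A) (f : A[X]) :
    (antiderivative f).comp (C u * X) = C u * antiderivative (f.comp (C u * X)) := by
  ext (_ | n)
  · simp [coeff_antiderivative_zero, comp_C_mul_X_coeff]
  · simp only [coeff_antiderivative_succ, comp_C_mul_X_coeff, coeff_C_mul, pow_succ,
      smul_mul_assoc, mul_smul_comm]
    ring_nf

/-- The degree of the polynomials of the family. -/
def polyDegree (ι : Type*) [Fintype ι] (e : ℕ) : ℕ :=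
  e + Fintype.card ι + 2

lemma polyDegree_ne_zero (ι : Type*) [Fintype ι] (e : ℕ) : polyDegree ι e ≠ 0 := by
  simp [polyDegree]

/-- The polynomial with parameter `q`: its derivative is `critPoly e q` and its value at `0` is
`q none ^ d`, where `d` is its degree. -/
noncomputable def poly (e : ℕ) (q : Option ι → A) : A[X] :=
  antiderivative (critPoly e q) + C (q none ^ polyDegree ι e)

/-- The `N`-th point of the orbit of each critical point. For `A = ℂ` this is the map
`F_N : ℂ^{d-1} → ℂ^{d-1}`. -/
noncomputable def critOrbit (e N : ℕ) (q : Option ι → A) (j : Option ι) : A :=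
  (fun z => (poly e q).eval z)^[N] (crit q j)

lemma derivative_poly (e : ℕ) (q : Option ι → A) : derivative (poly e q) = critPoly e q := by
  rw [poly, derivative_add, derivative_antiderivative, derivative_C, add_zero]

lemma eval_zero_poly (e : ℕ) (q : Option ι → A) : (poly e q).eval 0 = q none ^ polyDegree ι e := by
  simp [poly, ← coeff_zero_eq_eval_zero, coeff_antiderivative_zero]

lemma map_poly (φ : A →+* B) (e : ℕ) (q : Option ι → A) :
    (poly e q).map φ = poly e (φ ∘ q) := by
  simp [poly, map_antiderivative, map_critPoly]

lemma eval_poly_comp (φ : A →+* B) (e : ℕ) (q : Option ι → A) (z : A) :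
    (poly e (φ ∘ q)).eval (φ z) = φ ((poly e q).eval z) := by
  rw [← map_poly, eval_map_apply]

lemma critOrbit_comp (φ : A →+* B) (e N : ℕ) (q : Option ι → A) (j : Option ι) :
    critOrbit e N (φ ∘ q) j = φ (critOrbit e N q j) := by
  rw [critOrbit, critOrbit, crit_comp]
  exact (Function.Semiconj.iterate_right (fun z => (eval_poly_comp φ e q z).symm) N _).symm

lemma eval_poly_smul (e : ℕ) (u : A) (q : Option ι → A) (z : A) :
    (poly e (u • q)).eval (u * z) = u ^ polyDegree ι e * (poly e q).eval z := by
  have comp_eq : (poly e (u • q)).comp (C u * X) = C (u ^ polyDegree ι e) * poly e q := by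
    rw [poly, poly, add_comp, antiderivative_comp_C_mul_X, critPoly_smul_comp, ← smul_eq_C_mul
      (u ^ _), map_smul, smul_eq_C_mul, C_comp, Pi.smul_apply, smul_eq_mul, polyDegree]
    simp only [C_mul, C_pow]
    ring
  simpa [eval_comp] using congrArg (eval z) comp_eq

lemma coeff_poly_polyDegree (e : ℕ) (q : Option ι → A) :
    (poly e q).coeff (polyDegree ι e) = algebraMap ℚ A (polyDegree ι e : ℚ)⁻¹ := by
  nontriviality A
  have lead : (critPoly e q).coeff (e + Fintype.card ι + 1) = 1 := by
    rw [← natDegree_critPoly e q]; exact monic_critPoly e q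
  rw [poly, polyDegree, coeff_add, coeff_antiderivative_succ, lead, coeff_C_succ, add_zero,
    Algebra.algebraMap_eq_smul_one]
  push_cast
  ring_nf

lemma natDegree_poly [Nontrivial A] (e : ℕ) (q : Option ι → A) :
    (poly e q).natDegree = polyDegree ι e := by
  refine natDegree_eq_of_le_of_coeff_ne_zero (natDegree_le_iff_coeff_eq_zero.2 fun n hn => ?_) ?_
  · obtain ⟨m, rfl⟩ : ∃ m, n = m + 1 := ⟨n - 1, by omega⟩
    rw [poly, coeff_add, coeff_antiderivative_succ, coeff_C_succ, add_zero,
      coeff_eq_zero_of_natDegree_lt (by rw [natDegree_critPoly]; unfold polyDegree at hn; omega),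
      smul_zero]
  · rw [coeff_poly_polyDegree, Ne, FaithfulSMul.algebraMap_eq_zero_iff, inv_eq_zero,
      Nat.cast_eq_zero]
    exact polyDegree_ne_zero ι e

lemma leadingCoeff_poly [Nontrivial A] (e : ℕ) (q : Option ι → A) :
    (poly e q).leadingCoeff = algebraMap ℚ A (polyDegree ι e : ℚ)⁻¹ := by
  rw [leadingCoeff, natDegree_poly, coeff_poly_polyDegree]

lemma eval_poly_zero (e : ℕ) (z : A) :
    (poly e (0 : Option ι → A)).eval z =
      algebraMap ℚ A (polyDegree ι e : ℚ)⁻¹ * z ^ polyDegree ι e := by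
  have crit_zero (j : Option ι) : crit (0 : Option ι → A) j = 0 := by cases j <;> rfl
  have critPoly_zero : critPoly e (0 : Option ι → A) = monomial (e + Fintype.card ι + 1) 1 := by
    simp [critPoly, crit_zero, ← X_pow_eq_monomial, pow_add, mul_assoc]
  rw [poly, critPoly_zero, antiderivative_monomial, Pi.zero_apply,
    zero_pow (polyDegree_ne_zero ι e), C_0, add_zero, eval_smul, eval_monomial, one_mul,
    ← algebraMap_smul A (_ : ℚ), smul_eq_mul, polyDegree]
  push_cast
  ring_nf

end Family

section Zero

variable {ι K : Type*} [Field K]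

lemma subsingleton_isRoot_derivative [CharZero K] {P : K[X]} (hP : 0 < P.natDegree)
    (hs : (derivative P).Splits) (h : ∀ z, (derivative P).IsRoot z → P.IsRoot z) :
    {z | (derivative P).IsRoot z}.Subsingleton := by
  classical
  have hP0 : P ≠ 0 := ne_zero_of_natDegree_gt hP
  have hD0 : derivative P ≠ 0 := derivative_ne_zero.2 hP.ne'
  set S := (derivative P).roots.toFinset with hS
  have mem_S {z : K} : z ∈ S ↔ (derivative P).IsRoot z := by simp [hS, hD0]
  have sum_derivative : ∑ z ∈ S, (derivative P).rootMultiplicity z = P.natDegree - 1 := by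
    rw [← natDegree_derivative P, hs.natDegree_eq_card_roots, ← Multiset.toFinset_sum_count_eq]
    simp [hS]
  have sum_le : ∑ z ∈ S, P.rootMultiplicity z ≤ P.natDegree := by
    calc ∑ z ∈ S, P.rootMultiplicity z ≤ ∑ z ∈ P.roots.toFinset, P.rootMultiplicity z :=
          Finset.sum_le_sum_of_subset fun z hz => by simpa [hP0] using h z (mem_S.1 hz)
      _ = P.roots.card := by simp [← Multiset.toFinset_sum_count_eq]
      _ ≤ P.natDegree := card_roots' P
  have sum_eq : ∑ z ∈ S, P.rootMultiplicity z =
      ∑ z ∈ S, (derivative P).rootMultiplicity z + S.card := by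
    rw [Finset.card_eq_sum_ones, ← Finset.sum_add_distrib]
    refine Finset.sum_congr rfl fun z hz => ?_
    have hz : P.IsRoot z := h z (mem_S.1 hz)
    have := (rootMultiplicity_pos hP0).2 hz
    rw [derivative_rootMultiplicity_of_root hz]
    omega
  intro z hz z' hz'
  exact Finset.card_le_one.1 (by omega : S.card ≤ 1) z (mem_S.2 hz) z' (mem_S.2 hz')

variable [Fintype ι]

lemma isRoot_critPoly {e : ℕ} {q : Option ι → K} {z : K} :
    (critPoly e q).IsRoot z ↔ ∃ j, z = crit q j := by
  simp only [critPoly, IsRoot.def, eval_mul, eval_pow, eval_X, eval_prod, eval_sub, eval_C,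
    mul_eq_zero, Finset.prod_eq_zero_iff, Finset.mem_univ, true_and, sub_eq_zero]
  exact or_iff_right_of_imp fun h => ⟨none, eq_zero_of_pow_eq_zero h⟩

variable [Algebra ℚ K]

lemma eq_zero_of_eval_poly_crit_eq_zero {e : ℕ} {q : Option ι → K}
    (h : ∀ j, (poly e q).eval (crit q j) = 0) : q = 0 := by
  have : CharZero K := algebraRat.charZero K
  have hs : (derivative (poly e q)).Splits := by
    rw [derivative_poly, critPoly]
    exact (Splits.X_pow e).mul (Splits.prod fun i _ => Splits.X_sub_C _)
  have natDegree_pos : 0 < (poly e q).natDegree := by simp [natDegree_poly, polyDegree]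
  have crit_eq := subsingleton_isRoot_derivative natDegree_pos hs fun z hz => by
    rw [derivative_poly, isRoot_critPoly] at hz
    obtain ⟨j, rfl⟩ := hz
    exact h j
  have isRoot_crit (j : Option ι) : (derivative (poly e q)).IsRoot (crit q j) := by
    rw [derivative_poly]; exact isRoot_critPoly.2 ⟨j, rfl⟩
  funext j
  cases j with
  | none => exact eq_zero_of_pow_eq_zero <| (eval_zero_poly e q).symm.trans (h none)
  | some i => exact crit_eq (isRoot_crit (some i)) (isRoot_crit none)

end Zero

section Valuation

variable {ι K : Type*} [Field K]

lemma isIntegralElem_of_forall_valuationSubring {R : Type*} [CommRing R] (φ : R →+* K) {x : K}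
    (h : ∀ V : ValuationSubring K, (∀ r, φ r ∈ V) → x ∈ V) : φ.IsIntegralElem x := by
  have mem : x ∈ (integralClosure (Subring.closure (Set.range φ)) K).toSubring := by
    rw [← iInf_valuationSubring_superset, Subring.mem_iInf]
    exact fun V => h V.1 fun r => V.2 ⟨r, rfl⟩
  obtain ⟨p, hp, hpx⟩ : IsIntegral (Subring.closure (Set.range φ)) x := mem
  have closure_eq : Subring.closure (Set.range φ) = φ.range := by
    rw [← RingHom.coe_range, Subring.closure_eq]
  have surj : Function.Surjective (φ.codRestrict (Subring.closure (Set.range φ))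
      fun r => Subring.subset_closure ⟨r, rfl⟩) := by
    rintro ⟨y, hy⟩
    obtain ⟨r, rfl⟩ := closure_eq ▸ hy
    exact ⟨r, rfl⟩
  obtain ⟨p', rfl, -, hp'⟩ :=
    lifts_and_degree_eq_and_monic ((mem_lifts p).2 (map_surjective _ surj p)) hp
  exact ⟨p', hp', by rwa [eval₂_map] at hpx⟩

variable [Fintype ι] [Algebra ℚ K] (O : ValuationSubring K) [Algebra ℚ O]

lemma valuation_eval_poly_smul (e : ℕ) (t : Option ι → O) (z : O) (u : K)
    (h : (poly e (IsLocalRing.residue O ∘ t)).eval (IsLocalRing.residue O z) ≠ 0) :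
    O.valuation ((poly e (u • (O.subtype ∘ t))).eval (u * z)) = O.valuation u ^ polyDegree ι e := by
  rw [eval_poly_comp] at h
  have unit : IsUnit ((poly e t).eval z) := (IsLocalRing.residue_ne_zero_iff_isUnit _).1 h
  have : (poly e (O.subtype ∘ t)).eval (z : K) = ((poly e t).eval z : O) :=
    eval_poly_comp O.subtype e t z
  rw [eval_poly_smul, this, map_mul, map_pow, (O.valuation_eq_one_iff _).1 unit, mul_one]

variable {O}

lemma valuation_lt_valuation_eval_poly {e : ℕ} {q : Option ι → K} {z : K}
    (h1 : 1 < O.valuation z) (hz : ∀ j, O.valuation (q j) < O.valuation z) :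
    O.valuation z < O.valuation ((poly e q).eval z) := by
  choose t ht using fun j => (O.valuation_le_iff (q j) z).1 (hz j).le
  have q_eq : q = z • (O.subtype ∘ t) := by
    funext j; simpa [mul_comm] using (ht j).symm
  have residue_eq_zero : IsLocalRing.residue O ∘ t = 0 := by
    funext j
    refine (IsLocalRing.residue_eq_zero_iff _).2 ((O.valuation_lt_one_iff _).2 ?_)
    by_contra! one_le
    have := hz j
    rw [← ht j, map_mul] at this
    exact (le_mul_of_one_le_left' one_le).not_gt this
  have := valuation_eval_poly_smul O e t 1 z (by
    rw [residue_eq_zero, map_one, eval_poly_zero, one_pow, mul_one, Ne,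
      FaithfulSMul.algebraMap_eq_zero_iff, inv_eq_zero, Nat.cast_eq_zero]
    exact polyDegree_ne_zero ι e)
  rw [← q_eq, O.coe_one, mul_one] at this
  exact this.symm ▸ lt_self_pow₀ h1 (by simp [polyDegree])

lemma exists_valuation_lt_valuation_eval_poly_crit {e : ℕ} {q : Option ι → K} {j₀ : Option ι}
    (one_lt : 1 < O.valuation (q j₀)) (le_max : ∀ j, O.valuation (q j) ≤ O.valuation (q j₀)) :
    ∃ i, O.valuation (q j₀) < O.valuation ((poly e q).eval (crit q i)) := by
  have ne_zero : q j₀ ≠ 0 := fun h => by simp [h] at one_lt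
  choose t ht using fun j => (O.valuation_le_iff (q j) (q j₀)).1 (le_max j)
  have q_eq : q = q j₀ • (O.subtype ∘ t) := by
    funext j; simpa [mul_comm] using (ht j).symm
  have t_one : t j₀ = 1 := by
    exact_mod_cast mul_right_cancel₀ ne_zero ((ht j₀).trans (one_mul (q j₀)).symm)
  obtain ⟨i, hi⟩ : ∃ i, (poly e (IsLocalRing.residue O ∘ t)).eval
      (crit (IsLocalRing.residue O ∘ t) i) ≠ 0 := by
    by_contra! hall
    simpa [t_one] using congrFun (eq_zero_of_eval_poly_crit_eq_zero hall) j₀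
  rw [crit_comp] at hi
  have valuation_eq := valuation_eval_poly_smul O e t (crit t i) (q j₀) hi
  have crit_eq : crit q i = q j₀ * crit t i := by
    conv_lhs => rw [q_eq]
    rw [crit_smul, crit_comp]
    rfl
  refine ⟨i, ?_⟩
  rw [← q_eq, ← crit_eq] at valuation_eq
  exact valuation_eq.symm ▸ lt_self_pow₀ one_lt (by simp [polyDegree])

lemma mem_of_critOrbit_mem {e N : ℕ} (hN : N ≠ 0) {q : Option ι → K}
    (h : ∀ j, critOrbit e N q j ∈ O) (j : Option ι) : q j ∈ O := by
  obtain ⟨j₀, le_max⟩ := Finite.exists_max fun j => O.valuation (q j)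
  by_contra hj
  have one_lt : 1 < O.valuation (q j₀) :=
    (not_le.1 fun hle => hj ((O.valuation_le_one_iff _).1 hle)).trans_le (le_max j)
  obtain ⟨i, first⟩ := exists_valuation_lt_valuation_eval_poly_crit (e := e) one_lt le_max
  have escape (n : ℕ) : O.valuation (q j₀) < O.valuation (critOrbit e (n + 1) q i) := by
    induction n with
    | zero => exact first
    | succ n ih =>
      rw [critOrbit, Function.iterate_succ_apply']
      exact ih.trans
        (valuation_lt_valuation_eval_poly (one_lt.trans ih) fun j => (le_max j).trans_lt ih)
  obtain ⟨n, rfl⟩ := Nat.exists_eq_succ_of_ne_zero hN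
  exact (one_lt.trans (escape n)).not_ge ((O.valuation_le_one_iff _).2 (h i))

end Valuation

section Integral

variable (ι : Type*) [Fintype ι]

/-- The orbit of the critical points as polynomials in the parameters. -/
noncomputable def critOrbitPoly (e N : ℕ) (j : Option ι) : MvPolynomial (Option ι) ℂ :=
  critOrbit e N MvPolynomial.X j

variable {ι}

lemma eval_critOrbitPoly (e N : ℕ) (q : Option ι → ℂ) (j : Option ι) :
    MvPolynomial.eval q (critOrbitPoly ι e N j) = critOrbit e N q j := by
  rw [critOrbitPoly, ← critOrbit_comp]
  congr 1
  funext j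
  simp

lemma isIntegral_critOrbitPoly (e : ℕ) {N : ℕ} (hN : N ≠ 0) :
    (MvPolynomial.aeval (critOrbitPoly ι e N) :
      MvPolynomial (Option ι) ℂ →ₐ[ℂ] MvPolynomial (Option ι) ℂ).IsIntegral := by
  set φ : MvPolynomial (Option ι) ℂ →ₐ[ℂ] MvPolynomial (Option ι) ℂ :=
    MvPolynomial.aeval (critOrbitPoly ι e N) with hφ
  let K := FractionRing (MvPolynomial (Option ι) ℂ)
  let ψ : MvPolynomial (Option ι) ℂ →+* K := algebraMap _ K
  have integral_X (j : Option ι) : φ.IsIntegralElem (MvPolynomial.X j) := by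
    refine RingHom.IsIntegralElem.of_map (IsFractionRing.injective _ K : Function.Injective ψ)
      (isIntegralElem_of_forall_valuationSubring (ψ.comp φ.toRingHom) fun O hO => ?_)
    have rat_mem (r : ℚ) : algebraMap ℚ K r ∈ O := by
      have := hO (algebraMap ℚ _ r)
      rwa [← RingHom.comp_apply, Subsingleton.elim (RingHom.comp _ (algebraMap ℚ _))
        (algebraMap ℚ K)] at this
    let _ : Algebra ℚ O := ((algebraMap ℚ K).codRestrict O.toSubring rat_mem).toAlgebra
    refine mem_of_critOrbit_mem (O := O) (q := ψ ∘ MvPolynomial.X) hN (e := e) (fun i => ?_) j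
    rw [critOrbit_comp]
    simpa [hφ, critOrbitPoly] using hO (MvPolynomial.X i)
  intro f
  induction f using MvPolynomial.induction_on with
  | C c => simpa using φ.toRingHom.isIntegralElem_map (x := MvPolynomial.C c)
  | add f g hf hg => exact RingHom.IsIntegralElem.add _ hf hg
  | mul_X f j hf => exact RingHom.IsIntegralElem.mul _ hf (integral_X j)

end Integral

section DividedDifference

/-- The polynomial in `z` and `w` whose product with `z - w` is `f z - f w`. -/
def dividedDifference {A : Type*} [CommRing A] (f : A[X]) (z w : A) : A :=
  f.sum fun n c => c * ∑ i ∈ Finset.range n, z ^ i * w ^ (n - 1 - i)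

lemma dividedDifference_mul_sub {A : Type*} [CommRing A] (f : A[X]) (z w : A) :
    dividedDifference f z w * (z - w) = f.eval z - f.eval w := by
  simp only [dividedDifference, Polynomial.sum_def, Finset.sum_mul, eval_eq_sum,
    ← Finset.sum_sub_distrib, ← mul_sub]
  exact Finset.sum_congr rfl fun n _ => by rw [mul_assoc, (Commute.all z w).geom_sum₂_mul]

lemma dividedDifference_self {A : Type*} [CommRing A] (f : A[X]) (z : A) :
    dividedDifference f z z = (derivative f).eval z := by
  simp only [dividedDifference, geom_sum₂_self, derivative_eval, mul_assoc]

end DividedDifference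

section MonicFamily

variable {X Y Z : Type*} [TopologicalSpace X] [TopologicalSpace Y] [TopologicalSpace Z]

/-- A family of monic polynomials of degree `D` depending continuously on a parameter. -/
structure IsMonicFamily (p : Y → ℂ[X]) (D : ℕ) : Prop where
  monic (y : Y) : (p y).Monic
  natDegree_eq (y : Y) : (p y).natDegree = D
  continuous_coeff (n : ℕ) : Continuous fun y => (p y).coeff n

/-- The space of pairs `(y, z)` where `z` is a root of `p y`. -/
abbrev RootSpace (p : Y → ℂ[X]) : Type _ :=
  {x : Y × ℂ // (p x.1).IsRoot x.2}

/-- The projection of the space of roots to the parameter space. -/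
def RootSpace.proj (p : Y → ℂ[X]) (x : RootSpace p) : Y :=
  x.1.1

variable {p : Y → ℂ[X]} {D : ℕ}

lemma RootSpace.continuous_proj : Continuous (RootSpace.proj p) :=
  continuous_fst.comp continuous_subtype_val

namespace IsMonicFamily

lemma comp (hp : IsMonicFamily p D) {f : X → Y} (hf : Continuous f) : IsMonicFamily (p ∘ f) D where
  monic x := hp.monic (f x)
  natDegree_eq x := hp.natDegree_eq (f x)
  continuous_coeff n := (hp.continuous_coeff n).comp hf

variable (hp : IsMonicFamily p D)
include hp

lemma continuous_sum {f : Z → Y} (hf : Continuous f) {g : ℕ → Z → ℂ} (hg : ∀ n, Continuous (g n)) :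
    Continuous fun x => (p (f x)).sum fun n c => c * g n x := by
  have (x : Z) : ((p (f x)).sum fun n c => c * g n x) =
      ∑ n ∈ Finset.range (D + 1), (p (f x)).coeff n * g n x :=
    sum_over_range' _ (fun n => zero_mul _) _ (by simp [hp.natDegree_eq])
  simp only [this]
  exact continuous_finsetSum _ fun n _ => ((hp.continuous_coeff n).comp hf).mul (hg n)

lemma continuous_eval : Continuous fun x : Y × ℂ => (p x.1).eval x.2 := by
  simp only [eval_eq_sum]
  exact hp.continuous_sum continuous_fst fun n => by fun_prop

lemma continuous_dividedDifference :
    Continuous fun x : Y × ℂ × ℂ => dividedDifference (p x.1) x.2.1 x.2.2 :=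
  hp.continuous_sum continuous_fst fun n => by fun_prop

lemma isClosed_setOf_isRoot : IsClosed {x : Y × ℂ | (p x.1).IsRoot x.2} :=
  isClosed_singleton.preimage hp.continuous_eval

lemma norm_le_of_isRoot {y : Y} {z : ℂ} (hz : (p y).IsRoot z) :
    ‖z‖ ≤ ∑ n ∈ Finset.range D, ‖(p y).coeff n‖ + 1 := by
  have coeff_le (n : ℕ) (hn : n ∈ Finset.range (p y).natDegree) :
      ‖(p y).coeff n‖₊ ≤ ∑ n ∈ Finset.range D, ‖(p y).coeff n‖₊ :=
    Finset.single_le_sum (f := fun n => ‖(p y).coeff n‖₊) (fun _ _ => zero_le)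
      (hp.natDegree_eq y ▸ hn)
  have : cauchyBound (p y) ≤ ∑ n ∈ Finset.range D, ‖(p y).coeff n‖₊ + 1 := by
    rw [cauchyBound, (hp.monic y).leadingCoeff, nnnorm_one, div_one]
    gcongr
    exact Finset.sup_le coeff_le
  simpa using NNReal.coe_le_coe.2 ((hz.norm_lt_cauchyBound (hp.monic y).ne_zero).le.trans this)

lemma exists_eventually_norm_isRoot_le (y₀ : Y) :
    ∃ M : ℝ, ∀ᶠ y in 𝓝 y₀, ∀ z, (p y).IsRoot z → ‖z‖ ≤ M := by
  have cont : Continuous fun y => ∑ n ∈ Finset.range D, ‖(p y).coeff n‖ + 1 :=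
    (continuous_finsetSum _ fun n _ => (hp.continuous_coeff n).norm).add continuous_const
  exact ⟨_, ((cont.tendsto y₀).eventually_le_const (lt_add_one _)).mono
    fun y hy z hz => (hp.norm_le_of_isRoot hz).trans hy⟩

lemma eventually_exists_isRoot {y₀ : Y} {z₀ : ℂ} (hz₀ : (p y₀).IsRoot z₀) {U : Set ℂ}
    (hU : U ∈ 𝓝 z₀) : ∀ᶠ y in 𝓝 y₀, ∃ z ∈ U, (p y).IsRoot z := by
  obtain ⟨ε, ε_pos, hε⟩ := Metric.mem_nhds_iff.1 hU
  have D_ne_zero : D ≠ 0 := by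
    rintro rfl
    have := eq_one_of_monic_natDegree_zero (hp.monic y₀) (hp.natDegree_eq y₀)
    simp [this] at hz₀
  have cont : Continuous fun η : ℝ => ((D + 1) * η) ^ (D : ℝ)⁻¹ * max ‖z₀‖ 1 :=
    ((continuous_const.mul continuous_id).rpow_const fun _ => Or.inr (by positivity)).mul
      continuous_const
  obtain ⟨η, hη, η_pos⟩ := (((cont.continuousAt (x := 0)).eventually_lt
    (continuousAt_const (y := ε)) (by simp [D_ne_zero, ε_pos])).filter_mono
      nhdsWithin_le_nhds |>.and self_mem_nhdsWithin : ∀ᶠ η in 𝓝[>] (0 : ℝ), _).exists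
  have coeff_near : ∀ᶠ y in 𝓝 y₀, ∀ n ∈ Finset.range (D + 1),
      ‖(p y).coeff n - (p y₀).coeff n‖ < η :=
    (Finset.eventually_all _).2 fun n _ => ((hp.continuous_coeff n).sub
      continuous_const).norm.continuousAt.eventually_lt continuousAt_const (by simpa using η_pos)
  filter_upwards [coeff_near] with y hy
  obtain ⟨z, hz, hz'⟩ := exists_roots_norm_sub_lt_of_norm_coeff_sub_lt η_pos hz₀ (hp.monic y₀)
    (hp.monic y) (by simp [hp.natDegree_eq]) (fun n => by
      rcases lt_or_ge n (D + 1) with hn | hn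
      · exact hy n (Finset.mem_range.2 hn)
      · rw [coeff_eq_zero_of_natDegree_lt (by rw [hp.natDegree_eq]; lia),
          coeff_eq_zero_of_natDegree_lt (by rw [hp.natDegree_eq]; lia)]
        simpa using η_pos) (IsAlgClosed.splits _)
  rw [hp.natDegree_eq] at hz'
  exact ⟨z, hε (by rw [Metric.mem_ball, dist_comm, dist_eq_norm]; exact hz'.trans hη),
    isRoot_of_mem_roots hz⟩

lemma isProperMap_proj : IsProperMap (RootSpace.proj p) := by
  refine isProperMap_iff_ultrafilter.2 ⟨RootSpace.continuous_proj, fun 𝒰 y₀ hy₀ => ?_⟩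
  obtain ⟨M, hM⟩ := hp.exists_eventually_norm_isRoot_le y₀
  have mem : ∀ᶠ x in (𝒰 : Filter (RootSpace p)), x.1.2 ∈ Metric.closedBall (0 : ℂ) M :=
    (hy₀.eventually hM).mono fun x hx => by simpa using hx _ x.2
  obtain ⟨z₀, -, hz₀⟩ := (isCompact_closedBall (0 : ℂ) M).ultrafilter_le_nhds
    (𝒰.map fun x : RootSpace p => x.1.2) (le_principal_iff.2 mem)
  have lim : Tendsto Subtype.val (𝒰 : Filter (RootSpace p)) (𝓝 (y₀, z₀)) :=
    Tendsto.prodMk_nhds hy₀ hz₀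
  exact ⟨⟨(y₀, z₀), hp.isClosed_setOf_isRoot.mem_of_tendsto lim (.of_forall Subtype.prop)⟩, rfl,
    tendsto_subtype_rng.2 lim⟩

lemma isOpenMap_proj : IsOpenMap (RootSpace.proj p) := by
  refine isOpenMap_iff_nhds_le.2 fun ⟨⟨y₀, z₀⟩, hz₀⟩ s hs => ?_
  rw [mem_map, nhds_subtype_eq_comap, mem_comap] at hs
  obtain ⟨u, hu, hus⟩ := hs
  obtain ⟨V, hV, W, hW, hVW⟩ := mem_nhds_prod_iff.1 hu
  filter_upwards [hp.eventually_exists_isRoot hz₀ hW, hV] with y ⟨z, hzW, hz⟩ hyV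
  exact hus (a := ⟨(y, z), hz⟩) (hVW ⟨hyV, hzW⟩)

lemma exists_injOn_proj {x : RootSpace p} (hx : (p x.1.1).Separable) :
    ∃ U : Set (RootSpace p), IsOpen U ∧ x ∈ U ∧ U.InjOn (RootSpace.proj p) := by
  have simple_root : dividedDifference (p x.1.1) x.1.2 x.1.2 ≠ 0 := by
    rw [dividedDifference_self]
    simpa [eval₂_id] using hx.eval₂_derivative_ne_zero (RingHom.id ℂ) (x := x.1.2)
      (by simpa [eval₂_id] using x.2)
  have cont : Continuous fun v : RootSpace p × RootSpace p =>
      dividedDifference (p v.1.1.1) v.1.1.2 v.2.1.2 :=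
    hp.continuous_dividedDifference.comp (by fun_prop : Continuous
      fun v : RootSpace p × RootSpace p => (v.1.1.1, v.1.1.2, v.2.1.2))
  obtain ⟨U, ⟨hxU, hU⟩, ne_zero⟩ := (nhds_prod_eq (x := x) (y := x) ▸
    (nhds_basis_opens x).prod_self).mem_iff.1
      (cont.continuousAt.eventually_ne (x := (x, x)) simple_root)
  refine ⟨U, hU, hxU, ?_⟩
  rintro ⟨⟨y, z⟩, hz⟩ hzU ⟨⟨_, w⟩, hw⟩ hwU rfl
  have := dividedDifference_mul_sub (p y) z w
  rw [hz, show (p y).eval w = 0 from hw, sub_zero] at this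
  exact Subtype.ext (Prod.ext rfl
    (sub_eq_zero.1 ((mul_eq_zero.1 this).resolve_left (ne_zero (Set.mk_mem_prod hzU hwU)))))

lemma isLocalHomeomorphOn_proj :
    IsLocalHomeomorphOn (RootSpace.proj p) (RootSpace.proj p ⁻¹' {y | (p y).Separable}) := by
  refine IsLocalHomeomorphOn.mk _ _ fun x hx => ?_
  obtain ⟨U, hU, hxU, inj⟩ := hp.exists_injOn_proj hx
  have : Nonempty (RootSpace p) := ⟨x⟩
  exact ⟨.ofContinuousOpen (inj.toPartialEquiv _ _) RootSpace.continuous_proj.continuousOn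
    hp.isOpenMap_proj hU, hxU, fun _ _ => rfl⟩

lemma isCoveringMapOn_proj [T2Space Y] :
    IsCoveringMapOn (RootSpace.proj p) {y | (p y).Separable} := by
  refine hp.isProperMap_proj.isClosedMap.isCoveringMapOn_of_isLocalHomeomorphOn (fun y _ => ?_)
    hp.isLocalHomeomorphOn_proj
  refine Set.Finite.of_finite_image (f := fun x : RootSpace p => x.1.2)
    ((p y).roots.toFinset.finite_toSet.subset ?_) ?_
  · rintro _ ⟨⟨⟨_, z⟩, hz⟩, rfl, rfl⟩
    simpa [RootSpace.proj, (hp.monic _).ne_zero] using hz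
  · rintro ⟨⟨_, z⟩, hz⟩ rfl ⟨⟨y', z'⟩, hz'⟩ hy h
    exact Subtype.ext (Prod.ext hy.symm h)

lemma eventually_isRoot_mem {y₀ : Y} {U : Set ℂ} (hU : IsOpen U)
    (h : ∀ z, (p y₀).IsRoot z → z ∈ U) : ∀ᶠ y in 𝓝 y₀, ∀ z, (p y).IsRoot z → z ∈ U := by
  have closed : IsClosed (RootSpace.proj p '' {x | x.1.2 ∉ U}) :=
    hp.isProperMap_proj.isClosedMap _
      (hU.isClosed_compl.preimage (continuous_snd.comp continuous_subtype_val))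
  filter_upwards [closed.isOpen_compl.mem_nhds (x := y₀) (by
    rintro ⟨⟨⟨_, z⟩, hz⟩, hzU, rfl⟩; exact hzU (h z hz))] with y hy z hz
  by_contra hzU
  exact hy ⟨⟨(y, z), hz⟩, hzU, rfl⟩

end IsMonicFamily

end MonicFamily

section FiniteMap

variable {σ τ : Type*}

lemma exists_eval_eq_zero_and_forall_ne {K : Type*} [Field K] {s : Set (σ → K)} (hs : s.Finite)
    (x₀ : σ → K) : ∃ g : MvPolynomial σ K, MvPolynomial.eval x₀ g = 0 ∧
      ∀ x ∈ s, x ≠ x₀ → MvPolynomial.eval x g ≠ 0 := by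
  classical
  have separating (x : σ → K) (hx : x ≠ x₀) :
      ∃ f : MvPolynomial σ K, MvPolynomial.eval x f = 0 ∧ MvPolynomial.eval x₀ f ≠ 0 := by
    obtain ⟨i, hi⟩ := Function.ne_iff.1 hx
    exact ⟨MvPolynomial.X i - MvPolynomial.C (x i), by simp, by simpa [sub_eq_zero] using hi.symm⟩
  choose! f hf hf₀ using separating
  set h := ∏ x ∈ hs.toFinset.erase x₀, f x with h_def
  have h_ne_zero : MvPolynomial.eval x₀ h ≠ 0 := by
    rw [h_def, map_prod]
    exact Finset.prod_ne_zero_iff.2 fun x hx => hf₀ x (Finset.ne_of_mem_erase hx)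
  refine ⟨MvPolynomial.C (MvPolynomial.eval x₀ h) - h, by simp, fun x hx hne => ?_⟩
  have : MvPolynomial.eval x h = 0 := by
    rw [h_def, map_prod]
    exact Finset.prod_eq_zero (i := x) (by simp [hx, hne]) (hf x hne)
  simpa [this] using h_ne_zero

/-- The polynomial map with components `F j`. -/
noncomputable def polyMap (F : τ → MvPolynomial σ ℂ) (x : σ → ℂ) : τ → ℂ :=
  fun j => MvPolynomial.eval x (F j)

lemma continuous_polyMap (F : τ → MvPolynomial σ ℂ) : Continuous (polyMap F) :=
  continuous_pi fun j => MvPolynomial.continuous_eval (F j)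

lemma eval_polyMap (F : τ → MvPolynomial σ ℂ) (x : σ → ℂ) (g : MvPolynomial τ ℂ) :
    MvPolynomial.eval (polyMap F x) g = MvPolynomial.eval x (MvPolynomial.aeval F g) := by
  refine RingHom.congr_fun (g := (MvPolynomial.eval x).comp (MvPolynomial.aeval F).toRingHom)
    (MvPolynomial.ringHom_ext (fun c => ?_) fun j => ?_) g <;> simp [polyMap]

variable [Finite σ]

lemma algebraicIndependent_of_isIntegral_aeval {F : σ → MvPolynomial σ ℂ}
    (hF : (MvPolynomial.aeval F : MvPolynomial σ ℂ →ₐ[ℂ] MvPolynomial σ ℂ).IsIntegral) :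
    AlgebraicIndependent ℂ F := by
  have : Algebra.IsAlgebraic (Algebra.adjoin ℂ (Set.range F)) (MvPolynomial σ ℂ) := by
    refine ⟨fun g => IsIntegral.isAlgebraic ?_⟩
    rw [Algebra.adjoin_range_eq_range_aeval]
    obtain ⟨P, monic, hP⟩ := hF g
    refine ⟨P.map (MvPolynomial.aeval F).rangeRestrict.toRingHom, monic.map _, ?_⟩
    rwa [eval₂_map]
  refine (Algebra.IsAlgebraic.isTranscendenceBasis_of_le_trdeg_of_finite ℂ F ?_).1
  rw [MvPolynomial.trdeg_of_isDomain]
  simp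

lemma exists_eval_eq_of_isRoot_map_minpoly {K R : Type*} [Field K] [IsAlgClosed K]
    [CommRing R] [IsDomain R] [IsIntegrallyClosed R] [Algebra K R] [Algebra R (MvPolynomial σ K)]
    [IsScalarTower K R (MvPolynomial σ K)] [Algebra.IsIntegral R (MvPolynomial σ K)]
    [Module.IsTorsionFree R (MvPolynomial σ K)] {ev : R →ₐ[K] K}
    {g : MvPolynomial σ K} {z : K} (hz : ((minpoly R g).map ev.toRingHom).IsRoot z) :
    ∃ x : σ → K, (∀ r, MvPolynomial.eval x (algebraMap R _ r) = ev r) ∧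
      MvPolynomial.eval x g = z := by
  let θ : R[X] →+* K := eval₂RingHom ev.toRingHom z
  have surj : Function.Surjective θ := fun w => ⟨C (algebraMap K R w), by simp [θ]⟩
  have : (RingHom.ker θ).IsMaximal := RingHom.ker_isMaximal_of_surjective θ surj
  let _ : Algebra R[X] (MvPolynomial σ K) := (aeval g : R[X] →ₐ[R] _).toRingHom.toAlgebra
  have algebraMap_eq (P : R[X]) : algebraMap R[X] (MvPolynomial σ K) P = aeval g P := rfl
  have : IsScalarTower R R[X] (MvPolynomial σ K) :=
    .of_algebraMap_eq fun r => by rw [algebraMap_eq]; simp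
  have : Algebra.IsIntegral R[X] (MvPolynomial σ K) := .tower_top R
  have ker_le : RingHom.ker (algebraMap R[X] (MvPolynomial σ K)) ≤ RingHom.ker θ := by
    change RingHom.ker (aeval g : R[X] →ₐ[R] _).toRingHom ≤ _
    rw [minpoly.ker_eval (Algebra.IsIntegral.isIntegral g), Ideal.span_singleton_le_iff_mem,
      RingHom.mem_ker]
    rwa [IsRoot.def, eval_map] at hz
  obtain ⟨m, hm, m_over⟩ := Ideal.exists_ideal_over_maximal_of_isIntegral (RingHom.ker θ) ker_le
  obtain ⟨x, rfl⟩ := MvPolynomial.isMaximal_iff_eq_vanishingIdeal_singleton.1 hm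
  have eval_eq_zero (P : R[X]) (hP : θ P = 0) : MvPolynomial.eval x (aeval g P) = 0 := by
    have : P ∈ RingHom.ker θ := hP
    rwa [← m_over, Ideal.mem_comap, MvPolynomial.mem_vanishingIdeal_singleton_iff] at this
  have eval_eq (P : R[X]) : MvPolynomial.eval x (aeval g P) = θ P := by
    have := eval_eq_zero (P - C (algebraMap K R (θ P))) (by simp [θ])
    rwa [map_sub, map_sub, aeval_C, ← IsScalarTower.algebraMap_apply, MvPolynomial.algebraMap_eq,
      MvPolynomial.eval_C, sub_eq_zero] at this
  exact ⟨x, fun r => by simpa [θ] using eval_eq (C r), by simpa [θ] using eval_eq X⟩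

variable {F : τ → MvPolynomial σ ℂ}
  (hF : (MvPolynomial.aeval F : MvPolynomial τ ℂ →ₐ[ℂ] MvPolynomial σ ℂ).IsIntegral)
  (hind : AlgebraicIndependent ℂ F)
include hF hind

lemma exists_isMonicFamily_isRoot_iff (g : MvPolynomial σ ℂ) :
    ∃ (p : (τ → ℂ) → ℂ[X]) (D : ℕ), IsMonicFamily p D ∧
      ∀ y z, (p y).IsRoot z ↔ ∃ x, polyMap F x = y ∧ MvPolynomial.eval x g = z := by
  let _ : Algebra (MvPolynomial τ ℂ) (MvPolynomial σ ℂ) :=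
    (MvPolynomial.aeval F).toRingHom.toAlgebra
  have algebraMap_eq (r) : algebraMap (MvPolynomial τ ℂ) (MvPolynomial σ ℂ) r =
    MvPolynomial.aeval F r := rfl
  have : IsScalarTower ℂ (MvPolynomial τ ℂ) (MvPolynomial σ ℂ) :=
    .of_algebraMap_eq fun r => by simp [algebraMap_eq]
  have : Algebra.IsIntegral (MvPolynomial τ ℂ) (MvPolynomial σ ℂ) := ⟨hF⟩
  have : FaithfulSMul (MvPolynomial τ ℂ) (MvPolynomial σ ℂ) :=
    (faithfulSMul_iff_algebraMap_injective _ _).2 hind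
  have monic : (minpoly (MvPolynomial τ ℂ) g).Monic := minpoly.monic (hF g)
  refine ⟨fun y => (minpoly (MvPolynomial τ ℂ) g).map (MvPolynomial.eval y), _,
    ⟨fun y => monic.map _, fun y => monic.natDegree_map _, fun n => ?_⟩,
    fun y z => ⟨fun hz => ?_, ?_⟩⟩
  · simp only [coeff_map]
    exact MvPolynomial.continuous_eval _
  · obtain ⟨x, hx, hxz⟩ := exists_eval_eq_of_isRoot_map_minpoly (ev := MvPolynomial.aeval y) hz
    exact ⟨x, funext fun j => by simpa [algebraMap_eq, polyMap] using hx (MvPolynomial.X j), hxz⟩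
  · rintro ⟨x, rfl, rfl⟩
    have := congrArg (MvPolynomial.eval x) (minpoly.aeval (MvPolynomial τ ℂ) g)
    rw [map_zero, aeval_def, hom_eval₂] at this
    rw [IsRoot.def, eval_map, ← this]
    congr 1
    exact RingHom.ext fun r => eval_polyMap F x r

lemma isProperMap_polyMap [Finite τ] : IsProperMap (polyMap F) := by
  refine isProperMap_iff_ultrafilter.2 ⟨continuous_polyMap F, fun 𝒰 y₀ hy₀ => ?_⟩
  have bounded (i : σ) : ∃ M : ℝ, ∀ᶠ x in (𝒰 : Filter (σ → ℂ)), x i ∈ Metric.closedBall 0 M := by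
    obtain ⟨p, D, hp, isRoot_iff⟩ := exists_isMonicFamily_isRoot_iff hF hind (MvPolynomial.X i)
    obtain ⟨M, hM⟩ := hp.exists_eventually_norm_isRoot_le y₀
    exact ⟨M, (hy₀.eventually hM).mono fun x hx => by
      simpa using hx (x i) ((isRoot_iff _ _).2 ⟨x, rfl, by simp⟩)⟩
  choose M hM using bounded
  obtain ⟨x, -, hx⟩ :=
    (isCompact_univ_pi fun i => isCompact_closedBall (0 : ℂ) (M i)).ultrafilter_le_nhds 𝒰
      (le_principal_iff.2 ((eventually_all.2 hM).mono fun x hx i _ => hx i))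
  exact ⟨x, tendsto_nhds_unique (((continuous_polyMap F).tendsto x).mono_left hx) hy₀, hx⟩

lemma finite_polyMap_preimage_singleton (y : τ → ℂ) : (polyMap F ⁻¹' {y}).Finite := by
  choose p D hp isRoot_iff using fun i => exists_isMonicFamily_isRoot_iff hF hind (MvPolynomial.X i)
  refine (Set.Finite.pi' fun i => ((p i y).roots.toFinset.finite_toSet)).subset fun x hx i => ?_
  simpa [((hp i).monic y).ne_zero] using (isRoot_iff i y (x i)).2 ⟨x, hx, by simp⟩

lemma isOpenMap_polyMap [Finite τ] : IsOpenMap (polyMap F) := by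
  refine isOpenMap_iff_nhds_le.2 fun x₀ s hs => ?_
  obtain ⟨g, hg₀, hg⟩ := exists_eval_eq_zero_and_forall_ne
    (finite_polyMap_preimage_singleton hF hind (polyMap F x₀)) x₀
  obtain ⟨p, D, hp, isRoot_iff⟩ := exists_isMonicFamily_isRoot_iff hF hind g
  have proper : IsProperMap fun x => (polyMap F x, MvPolynomial.eval x g) :=
    isProperMap_of_comp_of_t2 ((continuous_polyMap F).prodMk (MvPolynomial.continuous_eval g))
      continuous_fst (isProperMap_polyMap hF hind)
  obtain ⟨U, hUs, hU, hx₀U⟩ := mem_nhds_iff.1 (mem_map.1 hs)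
  have not_mem :
      (polyMap F x₀, (0 : ℂ)) ∉ (fun x => (polyMap F x, MvPolynomial.eval x g)) '' Uᶜ := by
    rintro ⟨x, hxU, hx⟩
    obtain ⟨hx₁, hx₂⟩ := Prod.mk.inj hx
    exact hg x hx₁ (fun h => hxU (h ▸ hx₀U)) hx₂
  obtain ⟨V, hV, W, hW, hVW⟩ := mem_nhds_prod_iff.1
    ((proper.isClosedMap _ hU.isClosed_compl).isOpen_compl.mem_nhds not_mem)
  filter_upwards [hV, hp.eventually_exists_isRoot ((isRoot_iff _ _).2 ⟨x₀, rfl, hg₀⟩) hW]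
    with y hyV ⟨z, hzW, hz⟩
  obtain ⟨x, rfl, rfl⟩ := (isRoot_iff y z).1 hz
  have hxU : x ∈ U := by
    by_contra hxU
    exact hVW (Set.mk_mem_prod hyV hzW) ⟨x, hxU, rfl⟩
  exact hUs hxU

end FiniteMap

section RootSection

variable {T : Type*} [TopologicalSpace T] {D : ℕ}

namespace IsMonicFamily

section Limit

variable {p : T × ℝ → ℂ[X]} (hp : IsMonicFamily p D)
include hp

lemma exists_isRoot_eventually_mem {y : T × ℝ → ℂ}
    (cont_y : ContinuousOn y (Set.univ ×ˢ Set.Ico 0 1))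
    (root_y : ∀ t, ∀ s ∈ Set.Ico (0 : ℝ) 1, (p (t, s)).IsRoot (y (t, s))) (t : T)
    {U : ℂ → Set ℂ} (mem_U : ∀ r, r ∈ U r) (open_U : ∀ r, IsOpen (U r))
    (disjoint_U : {r | (p (t, 1)).IsRoot r}.PairwiseDisjoint U) :
    ∃ r, (p (t, 1)).IsRoot r ∧ ∀ᶠ x in 𝓝[Set.univ ×ˢ Set.Ico 0 1] (t, 1), y x ∈ U r := by
  have near : ∀ᶠ x in 𝓝 (t, (1 : ℝ)), ∀ z, (p x).IsRoot z →
      z ∈ ⋃ r ∈ {r | (p (t, 1)).IsRoot r}, U r :=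
    hp.eventually_isRoot_mem (isOpen_biUnion fun r _ => open_U r)
      fun r hr => Set.mem_biUnion hr (mem_U r)
  obtain ⟨V, hV, W, hW, hVW⟩ := mem_nhds_prod_iff.1 near
  obtain ⟨l, ⟨l_nonneg, l_lt⟩, hlW⟩ := exists_Ioc_subset_of_mem_nhds' hW (zero_lt_one (α := ℝ))
  obtain ⟨s₁, hs₁⟩ := exists_between l_lt
  have mem_Ico {s : ℝ} (hs : s ∈ Set.Ioo l 1) : s ∈ Set.Ico (0 : ℝ) 1 :=
    ⟨l_nonneg.trans hs.1.le, hs.2⟩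
  have covered {t'} (ht' : t' ∈ V) {s} (hs : s ∈ Set.Ioo l 1) :
      y (t', s) ∈ ⋃ r ∈ {r | (p (t, 1)).IsRoot r}, U r :=
    hVW (Set.mk_mem_prod ht' (hlW ⟨hs.1, hs.2.le⟩)) _ (root_y t' s (mem_Ico hs))
  obtain ⟨r, hr, hrU⟩ := Set.mem_iUnion₂.1 (covered (mem_of_mem_nhds hV) hs₁)
  have cont_s₁ : Continuous fun t' => y (t', s₁) :=
    cont_y.comp_continuous (by fun_prop) fun _ => ⟨trivial, mem_Ico hs₁⟩
  have stay {t'} (ht' : t' ∈ V) (hs₁U : y (t', s₁) ∈ U r) :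
      (fun s => y (t', s)) '' Set.Ioo l 1 ⊆ U r := by
    refine IsPreconnected.subset_left_of_subset_union (open_U r)
      (isOpen_biUnion fun r' (_ : r' ∈ {r' | (p (t, 1)).IsRoot r'} \ {r}) => open_U r')
      (Set.disjoint_iUnion₂_right.2 fun r' hr' => disjoint_U hr hr'.1 (Ne.symm hr'.2)) ?_
      ⟨_, Set.mem_image_of_mem _ hs₁, hs₁U⟩
      (isPreconnected_Ioo.image _ (cont_y.comp (by fun_prop) fun s hs => ⟨trivial, mem_Ico hs⟩))
    rintro _ ⟨s, hs, rfl⟩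
    obtain ⟨r', hr', hr'U⟩ := Set.mem_iUnion₂.1 (covered ht' hs)
    obtain rfl | ne := eq_or_ne r' r
    exacts [.inl hr'U, .inr (Set.mem_biUnion ⟨hr', ne⟩ hr'U)]
  have stay_nhds : ∀ᶠ x in 𝓝 (t, (1 : ℝ)), (x.1 ∈ V ∧ y (x.1, s₁) ∈ U r) ∧ l < x.2 :=
    (Filter.Eventually.and hV (cont_s₁.continuousAt.eventually ((open_U r).mem_nhds hrU))).prod_nhds
      (lt_mem_nhds l_lt)
  refine ⟨r, hr, ?_⟩
  filter_upwards [mem_nhdsWithin_of_mem_nhds stay_nhds, self_mem_nhdsWithin] with x hx hxs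
  exact stay hx.1.1 hx.1.2 ⟨x.2, ⟨hx.2, hxs.2.2⟩, rfl⟩

lemma exists_tendsto_isRoot {y : T × ℝ → ℂ}
    (cont_y : ContinuousOn y (Set.univ ×ˢ Set.Ico 0 1))
    (root_y : ∀ t, ∀ s ∈ Set.Ico (0 : ℝ) 1, (p (t, s)).IsRoot (y (t, s))) (t : T) :
    ∃ r, Tendsto y (𝓝[Set.univ ×ˢ Set.Ico 0 1] (t, 1)) (𝓝 r) := by
  have finite_roots : {r | (p (t, 1)).IsRoot r}.Finite :=
    (p (t, 1)).roots.toFinset.finite_toSet.subset fun r hr => by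
      simpa [(hp.monic _).ne_zero] using hr
  obtain ⟨U, hU, disjoint_U⟩ := finite_roots.t2_separation
  obtain ⟨r, hr, hrU⟩ := hp.exists_isRoot_eventually_mem cont_y root_y t (fun r => (hU r).1)
    (fun r => (hU r).2) disjoint_U
  have neBot : (𝓝[Set.univ ×ˢ Set.Ico 0 1] (t, (1 : ℝ))).NeBot := by
    rw [← mem_closure_iff_nhdsWithin_neBot, closure_prod_eq, closure_Ico zero_ne_one]
    simp
  refine ⟨r, (nhds_basis_opens r).tendsto_right_iff.2 fun V ⟨hrV, hV⟩ => ?_⟩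
  classical
  have shrink (r') : Function.update U r (U r ∩ V) r' ⊆ U r' := by
    obtain rfl | ne := eq_or_ne r' r <;> simp [*]
  obtain ⟨r', hr', hr'U⟩ := hp.exists_isRoot_eventually_mem cont_y root_y t
    (U := Function.update U r (U r ∩ V))
    (fun r' => by obtain rfl | ne := eq_or_ne r' r <;> simp [*])
    (fun r' => by obtain rfl | ne := eq_or_ne r' r <;> simp [*, (hU _).2, IsOpen.inter])
    (disjoint_U.mono_on fun r' _ => shrink r')
  obtain rfl : r' = r := by
    by_contra ne
    obtain ⟨x, hx, hx'⟩ := (hrU.and hr'U).exists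
    exact Set.disjoint_left.1 (disjoint_U hr hr' (Ne.symm ne)) hx (shrink r' hx')
  filter_upwards [hr'U] with x hx
  rw [Function.update_self] at hx
  exact hx.2

end Limit

variable [T2Space T]

lemma isCoveringMap_proj {p : T → ℂ[X]} (hp : IsMonicFamily p D) (sep : ∀ t, (p t).Separable) :
    IsCoveringMap (RootSpace.proj p) :=
  isCoveringMap_iff_isCoveringMapOn_univ.2
    (hp.isCoveringMapOn_proj.mono fun t _ => sep t)

lemma eq_of_isRoot_of_eq {p : T → ℂ[X]} (hp : IsMonicFamily p D) (sep : ∀ t, (p t).Separable)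
    [PreconnectedSpace T] {y z : T → ℂ} (hy : Continuous y) (hz : Continuous z)
    (root_y : ∀ t, (p t).IsRoot (y t)) (root_z : ∀ t, (p t).IsRoot (z t)) {t₀ : T}
    (h : y t₀ = z t₀) : y = z := by
  have := (hp.isCoveringMap_proj sep).eq_of_comp_eq
    (g₁ := fun t => ⟨(t, y t), root_y t⟩) (g₂ := fun t => ⟨(t, z t), root_z t⟩)
    (by fun_prop) (by fun_prop) rfl t₀ (Subtype.ext (Prod.ext rfl h))
  exact funext fun t => congr_arg (fun x : RootSpace p => x.1.2) (congr_fun this t)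

lemma exists_continuous_isRoot {p : unitInterval × T → ℂ[X]} (hp : IsMonicFamily p D)
    (sep : ∀ x, (p x).Separable) {y₀ : T → ℂ} (hy₀ : Continuous y₀)
    (root : ∀ t, (p (0, t)).IsRoot (y₀ t)) :
    ∃ y : unitInterval × T → ℂ, Continuous y ∧ (∀ x, (p x).IsRoot (y x)) ∧
      ∀ t, y (0, t) = y₀ t := by
  let start : C(T, RootSpace p) := ⟨fun t => ⟨((0, t), y₀ t), root t⟩, by fun_prop⟩
  let lift := (hp.isCoveringMap_proj sep).liftHomotopy (ContinuousMap.id _) start fun t => rfl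
  refine ⟨fun x => (lift x).1.2, by fun_prop, fun x => ?_, fun t => ?_⟩
  · have proj_lift : (lift x).1.1 = x :=
      congr_fun ((hp.isCoveringMap_proj sep).liftHomotopy_lifts _ start fun t => rfl) x
    simpa only [proj_lift] using (lift x).2
  · exact congr_arg (fun x : RootSpace p => x.1.2)
      ((hp.isCoveringMap_proj sep).liftHomotopy_zero _ start (fun t => rfl) t)

variable {p : T × ℝ → ℂ[X]} (hp : IsMonicFamily p D)
include hp

lemma exists_continuousOn_isRoot (sep : ∀ t, ∀ s ∈ Set.Ico (0 : ℝ) 1, (p (t, s)).Separable)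
    {y₀ : T → ℂ} (hy₀ : Continuous y₀) (root : ∀ t, (p (t, 0)).IsRoot (y₀ t)) :
    ∃ y : T × ℝ → ℂ, ContinuousOn y (Set.univ ×ˢ Set.Ico 0 1) ∧
      (∀ t, ∀ s ∈ Set.Ico (0 : ℝ) 1, (p (t, s)).IsRoot (y (t, s))) ∧ ∀ t, y (t, 0) = y₀ t := by
  let scale (x : unitInterval × T × Set.Ico (0 : ℝ) 1) : T × ℝ := (x.2.1, x.1 * x.2.2)
  have cont_scale : Continuous scale := by fun_prop
  have sep_scale (x) : (p (scale x)).Separable :=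
    sep _ _ ⟨mul_nonneg x.1.2.1 x.2.2.2.1,
      (mul_le_of_le_one_left x.2.2.2.1 x.1.2.2).trans_lt x.2.2.2.2⟩
  obtain ⟨y, cont_y, root_y, y_zero⟩ := (hp.comp cont_scale).exists_continuous_isRoot sep_scale
    (y₀ := fun x => y₀ x.1) (by fun_prop) (fun x => by simpa [scale] using root x.1)
  refine ⟨fun x => if hs : x.2 ∈ Set.Ico (0 : ℝ) 1 then y (1, x.1, ⟨x.2, hs⟩) else 0, ?_,
    fun t s hs => ?_, fun t => ?_⟩
  · have : Continuous fun x : (Set.univ ×ˢ Set.Ico (0 : ℝ) 1 : Set (T × ℝ)) =>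
      y (1, x.1.1, ⟨x.1.2, x.2.2⟩) := by fun_prop
    refine continuousOn_iff_continuous_domRestrict.2 (this.congr fun x => ?_)
    simp only [Set.domRestrict_apply, dif_pos x.2.2]
  · simpa [hs.1, hs.2, scale] using root_y (1, t, ⟨s, hs⟩)
  · let origin : Set.Ico (0 : ℝ) 1 := ⟨0, le_rfl, one_pos⟩
    have const :=
      (hp.comp (f := fun _ : unitInterval => (t, 0)) continuous_const).eq_of_isRoot_of_eq
        (fun _ => sep t 0 origin.2) (y := fun u => y (u, t, origin)) (z := fun _ => y₀ t)
        (by fun_prop) continuous_const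
        (fun u => by simpa [scale, origin] using root_y (u, t, origin)) (fun _ => root t)
        (y_zero (t, origin))
    exact (dif_pos origin.2).trans (congr_fun const 1)

theorem exists_continuousOn_Icc_isRoot
    (sep : ∀ t, ∀ s ∈ Set.Ico (0 : ℝ) 1, (p (t, s)).Separable)
    {y₀ : T → ℂ} (hy₀ : Continuous y₀) (root : ∀ t, (p (t, 0)).IsRoot (y₀ t)) :
    ∃ y : T × ℝ → ℂ, ContinuousOn y (Set.univ ×ˢ Set.Icc 0 1) ∧
      (∀ t, ∀ s ∈ Set.Ico (0 : ℝ) 1, (p (t, s)).IsRoot (y (t, s))) ∧ ∀ t, y (t, 0) = y₀ t := by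
  obtain ⟨y, cont_y, root_y, y_zero⟩ := hp.exists_continuousOn_isRoot sep hy₀ root
  let slab : Set (T × ℝ) := Set.univ ×ˢ Set.Ico 0 1
  have extend_eq {x} (hx : x ∈ slab) : extendFrom slab y x = y x :=
    extendFrom_eq (subset_closure hx) (cont_y x hx)
  refine ⟨extendFrom slab y, continuousOn_extendFrom ?_ ?_, fun t s hs => ?_, fun t => ?_⟩
  · rw [closure_prod_eq, closure_Ico zero_ne_one, closure_univ]
  · rintro ⟨t, s⟩ ⟨-, s_nonneg, s_le : s ≤ 1⟩
    obtain rfl | s_lt := s_le.eq_or_lt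
    exacts [hp.exists_tendsto_isRoot cont_y root_y t, ⟨_, cont_y _ ⟨trivial, s_nonneg, s_lt⟩⟩]
  · exact (extend_eq (x := (t, s)) ⟨trivial, hs⟩).symm ▸ root_y t s hs
  · exact (extend_eq ⟨trivial, le_rfl, one_pos⟩).trans (y_zero t)

end IsMonicFamily

end RootSection

section RayPoly

variable {q : ℂ[X]}

/-- The polynomial `τ ^ D * q (y / τ) - 1` in `y`, where `D = deg q`. If `q` is monic, then at
`τ = 0` this is `y ^ D - 1`, and for `τ = s / w` the points `w * y / s` at its roots `y` solve
`q z = (w / s) ^ D`: as `s` grows from `0`, they trace the external rays of `q`. -/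
noncomputable def rayPoly (q : ℂ[X]) (τ : ℂ) : ℂ[X] :=
  scaleRoots q τ - 1

lemma eval_rayPoly_mul (q : ℂ[X]) (τ z : ℂ) :
    (rayPoly q τ).eval (τ * z) = τ ^ q.natDegree * q.eval z - 1 := by
  rw [rayPoly, eval_sub, scaleRoots_eval_mul, eval_one]

lemma rayPoly_zero (hq : q.Monic) : rayPoly q 0 = X ^ q.natDegree - 1 := by
  rw [rayPoly, scaleRoots_zero, hq.leadingCoeff, one_smul]

lemma eval_rayPoly_rotate (q : ℂ[X]) (τ y : ℂ) {η : ℂ} (hη : η ^ q.natDegree = 1) (hη₀ : η ≠ 0) :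
    (rayPoly q τ).eval (η * y) = (rayPoly q (τ / η)).eval y := by
  have := scaleRoots_eval_mul (scaleRoots q (τ / η)) y η
  rw [← scaleRoots_mul, div_mul_cancel₀ _ hη₀, natDegree_scaleRoots, hη, one_mul] at this
  rw [rayPoly, eval_sub, this, rayPoly, eval_sub, eval_one, eval_one]

lemma separable_rayPoly (hq : q.Monic) (hD : q.natDegree ≠ 0) {ρ : ℝ}
    (crit : ∀ z, (derivative q).IsRoot z → ‖q.eval z‖ ≤ ρ ^ q.natDegree) {τ : ℂ}
    (hτ : ‖τ‖ * ρ < 1) (hρ : 0 ≤ ρ) : (rayPoly q τ).Separable := by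
  obtain rfl | τ_ne := eq_or_ne τ 0
  · rw [rayPoly_zero hq]
    exact separable_X_pow_sub_C (1 : ℂ) (Nat.cast_ne_zero.2 hD) one_ne_zero
  refine (isCoprime_iff_aeval_ne_zero_of_isAlgClosed ℂ ℂ _ _).2 fun y => ?_
  by_contra! ⟨root, double⟩
  obtain ⟨z, rfl⟩ : ∃ z, y = τ * z := ⟨y / τ, by field_simp⟩
  rw [coe_aeval_eq_eval] at root double
  have comp_eq : (rayPoly q τ).comp (C τ * X) = C (τ ^ q.natDegree) * q - 1 :=
    Polynomial.funext fun x => by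
      simpa only [eval_comp, eval_mul, eval_sub, eval_C, eval_X, eval_one] using
        eval_rayPoly_mul q τ x
  have crit_z : (derivative q).IsRoot z := by
    simpa [eval_comp, derivative_comp, double, τ_ne, -map_pow] using
      (congr_arg (fun f => (derivative f).eval z) comp_eq).symm
  rw [eval_rayPoly_mul, sub_eq_zero] at root
  have := calc
    1 = ‖τ‖ ^ q.natDegree * ‖q.eval z‖ := by rw [← norm_pow, ← norm_mul, root, norm_one]
    _ ≤ ‖τ‖ ^ q.natDegree * ρ ^ q.natDegree := by gcongr; exact crit z crit_z
    _ = (‖τ‖ * ρ) ^ q.natDegree := (mul_pow _ _ _).symm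
    _ < 1 := pow_lt_one₀ (by positivity) hτ hD
  exact this.false

lemma separable_rayPoly_div (hq : q.Monic) (hD : q.natDegree ≠ 0) {ρ : ℝ} (hρ : 0 < ρ)
    (crit : ∀ z, (derivative q).IsRoot z → ‖q.eval z‖ ≤ ρ ^ q.natDegree) {w : ℂ} (hw : ‖w‖ = ρ)
    {s : ℝ} (hs : s ∈ Set.Ico (0 : ℝ) 1) : (rayPoly q (s / w)).Separable := by
  refine separable_rayPoly hq hD crit ?_ hρ.le
  rw [norm_div, hw, Complex.norm_real, Real.norm_of_nonneg hs.1, div_mul_cancel₀ _ hρ.ne']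
  exact hs.2

lemma IsMonicFamily.rayPoly {Y : Type*} [TopologicalSpace Y] {p : Y → ℂ[X]} {D : ℕ}
    (hp : IsMonicFamily p D) (hD : D ≠ 0) {τ : Y → ℂ} (hτ : Continuous τ) :
    IsMonicFamily (fun y => rayPoly (p y) (τ y)) D where
  monic y := ((monic_scaleRoots_iff _).2 (hp.monic y)).sub_of_left (by
    rw [degree_scaleRoots, degree_eq_natDegree (hp.monic y).ne_zero, hp.natDegree_eq, degree_one]
    exact mod_cast Nat.pos_of_ne_zero hD)
  natDegree_eq y := by
    simp only [CriticalFamily.rayPoly]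
    rw [← C_1, natDegree_sub_C, natDegree_scaleRoots, hp.natDegree_eq]
  continuous_coeff n := by
    simp only [CriticalFamily.rayPoly, coeff_sub, coeff_scaleRoots, hp.natDegree_eq]
    exact ((hp.continuous_coeff n).mul (hτ.pow _)).sub continuous_const

end RayPoly

section RayLanding

variable {S : Type*} [TopologicalSpace S] {Q : S → ℂ[X]} {D : ℕ} {ρ : ℝ}

lemma norm_mul_of_mem_nthRootsFinset_one {η : ℂ} (hη : η ∈ nthRootsFinset D (1 : ℂ)) (w : ℂ) :
    ‖η * w‖ = ‖w‖ := by
  obtain rfl | hD := eq_or_ne D 0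
  · simp at hη
  rw [norm_mul, Complex.norm_eq_one_of_pow_eq_one
    ((mem_nthRootsFinset (Nat.pos_of_ne_zero hD) _).1 hη) hD, one_mul]

/-- `w * y s / s` runs along an external ray of `q`, from infinity (at `s = 0`) in the direction
of `w` to the level `‖w‖ ^ deg q` (at `s = 1`), where it lands at `w * y 1`. -/
structure IsRay (q : ℂ[X]) (w : ℂ) (y : ℝ → ℂ) : Prop where
  continuousOn : ContinuousOn y (Set.Icc 0 1)
  apply_zero : y 0 = 1
  isRoot {s : ℝ} (hs : s ∈ Set.Ico (0 : ℝ) 1) : (rayPoly q (s / w)).IsRoot (y s)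

lemma exists_isRay [T2Space S] (hQ : IsMonicFamily Q D) (hD : D ≠ 0) (hρ : 0 < ρ)
    (crit : ∀ p z, (derivative (Q p)).IsRoot z → ‖(Q p).eval z‖ ≤ ρ ^ D) :
    ∃ y : S × ℂ → ℝ → ℂ, ContinuousOn (fun x => y x 1) (Set.univ ×ˢ Metric.sphere 0 ρ) ∧
      ∀ p w, ‖w‖ = ρ → IsRay (Q p) w (y (p, w)) := by
  have norm_coe (w : Metric.sphere (0 : ℂ) ρ) : ‖(w : ℂ)‖ = ρ := by simp
  have coe_ne (w : Metric.sphere (0 : ℂ) ρ) : (w : ℂ) ≠ 0 :=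
    norm_pos_iff.1 (hρ.trans_eq (norm_coe w).symm)
  have family : IsMonicFamily (fun x : (S × Metric.sphere (0 : ℂ) ρ) × ℝ =>
      rayPoly (Q x.1.1) (x.2 / x.1.2)) D :=
    (hQ.comp (f := fun x : (S × Metric.sphere (0 : ℂ) ρ) × ℝ => x.1.1) (by fun_prop)).rayPoly hD
      (by fun_prop (disch := exact fun _ => coe_ne _))
  obtain ⟨Y, cont_Y, root_Y, Y_zero⟩ := family.exists_continuousOn_Icc_isRoot
    (fun x s hs => separable_rayPoly_div (hQ.monic _) (by rwa [hQ.natDegree_eq]) hρ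
      (by simpa only [hQ.natDegree_eq] using crit x.1) (norm_coe x.2) hs)
    (y₀ := fun _ => 1) continuous_const (by simp [rayPoly_zero (hQ.monic _)])
  have mem_sphere {w : ℂ} (hw : ‖w‖ = ρ) : w ∈ Metric.sphere (0 : ℂ) ρ := by simpa using hw
  let y (x : S × ℂ) (s : ℝ) : ℂ := if h : ‖x.2‖ = ρ then Y ((x.1, ⟨x.2, mem_sphere h⟩), s) else 0
  have y_eq (p : S) {w : ℂ} (hw : ‖w‖ = ρ) : y (p, w) = fun s => Y ((p, ⟨w, mem_sphere hw⟩), s) :=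
    funext fun s => dif_pos hw
  refine ⟨y, ?_, fun p w hw => ?_⟩
  · have cont_landing : Continuous fun x => Y (x, 1) :=
      cont_Y.comp_continuous (by fun_prop) fun x => ⟨trivial, zero_le_one, le_rfl⟩
    have : Continuous fun x : (Set.univ ×ˢ Metric.sphere 0 ρ : Set (S × ℂ)) =>
        Y ((x.1.1, ⟨x.1.2, x.2.2⟩), 1) := cont_landing.comp (by fun_prop)
    exact continuousOn_iff_continuous_domRestrict.2
      (this.congr fun x => (congr_fun (y_eq x.1.1 (by simpa using x.2.2)) 1).symm)
  · rw [y_eq p hw]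
    let t : S × Metric.sphere (0 : ℂ) ρ := (p, ⟨w, mem_sphere hw⟩)
    exact ⟨cont_Y.comp (f := fun s => (t, s)) (by fun_prop) fun s hs => ⟨trivial, hs⟩,
      Y_zero t, fun hs => root_Y t _ hs⟩

section SinglePolynomial

variable {q : ℂ[X]} {y : ℂ → ℝ → ℂ} (hq : q.Monic) (hD : q.natDegree ≠ 0) (hρ : 0 < ρ)
  (crit : ∀ z, (derivative q).IsRoot z → ‖q.eval z‖ ≤ ρ ^ q.natDegree)
  (hy : ∀ w, ‖w‖ = ρ → IsRay q w (y w)) {w : ℂ} (hw : ‖w‖ = ρ)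
include hq hD hρ crit hy hw

lemma prod_X_sub_C_isRay_eq {s : ℝ} (hs : s ∈ Set.Ico (0 : ℝ) 1) :
    ∏ η ∈ nthRootsFinset q.natDegree (1 : ℂ), (X - C (η * y (η * w) s)) = rayPoly q (s / w) := by
  have family : IsMonicFamily (fun s : Set.Ico (0 : ℝ) 1 => rayPoly q (s / w)) q.natDegree :=
    IsMonicFamily.rayPoly ⟨fun _ => hq, fun _ => rfl, fun _ => continuous_const⟩ hD (by fun_prop)
  have sep (s : Set.Ico (0 : ℝ) 1) : (rayPoly q (s / w)).Separable :=
    separable_rayPoly_div hq hD hρ crit hw s.2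
  have : PreconnectedSpace (Set.Ico (0 : ℝ) 1) := Subtype.preconnectedSpace isPreconnected_Ico
  have ray {η : ℂ} (hη : η ∈ nthRootsFinset q.natDegree (1 : ℂ)) : IsRay q (η * w) (y (η * w)) :=
    hy _ ((norm_mul_of_mem_nthRootsFinset_one hη w).trans hw)
  have root {η : ℂ} (hη : η ∈ nthRootsFinset q.natDegree (1 : ℂ)) (s : Set.Ico (0 : ℝ) 1) :
      (rayPoly q (s / w)).IsRoot (η * y (η * w) s) := by
    rw [IsRoot, eval_rayPoly_rotate q _ _ ((mem_nthRootsFinset (Nat.pos_of_ne_zero hD) _).1 hη)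
      (ne_zero_of_mem_nthRootsFinset one_ne_zero hη), div_div, mul_comm w]
    exact (ray hη).isRoot s.2
  have cont {η : ℂ} (hη : η ∈ nthRootsFinset q.natDegree (1 : ℂ)) :
      Continuous fun s : Set.Ico (0 : ℝ) 1 => η * y (η * w) s :=
    continuous_const.mul (((ray hη).continuousOn.mono Set.Ico_subset_Icc_self).comp_continuous
      continuous_subtype_val Subtype.prop)
  refine (eq_of_monic_of_dvd_of_natDegree_le (monic_prod_of_monic _ _ fun _ _ => monic_X_sub_C _)
    (family.monic ⟨s, hs⟩) (Finset.prod_dvd_of_coprime (fun η hη η' hη' ne => ?_)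
      fun η hη => dvd_iff_isRoot.2 (root hη ⟨s, hs⟩)) ?_).symm
  · refine isCoprime_X_sub_C_of_isUnit_sub (IsUnit.mk0 _ (sub_ne_zero.2 fun h => ne ?_))
    have := congr_fun (family.eq_of_isRoot_of_eq sep (cont hη) (cont hη') (root hη) (root hη')
      (t₀ := ⟨s, hs⟩) h) ⟨0, le_rfl, one_pos⟩
    simpa [(ray hη).apply_zero, (ray hη').apply_zero] using this
  · rw [family.natDegree_eq ⟨s, hs⟩, natDegree_prod_of_monic _ _ fun _ _ => monic_X_sub_C _]
    simp only [natDegree_X_sub_C, Finset.sum_const, smul_eq_mul, mul_one,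
      (Complex.isPrimitiveRoot_exp _ hD).card_nthRootsFinset, le_refl]

lemma prod_X_sub_C_landing_eq :
    ∏ η ∈ nthRootsFinset q.natDegree (1 : ℂ), (X - C (η * w * y (η * w) 1)) =
      q - C (w ^ q.natDegree) := by
  have w_ne : w ≠ 0 := norm_pos_iff.1 (hρ.trans_eq hw.symm)
  have limit (x : ℂ) : ∏ η ∈ nthRootsFinset q.natDegree (1 : ℂ), (x - η * y (η * w) 1) =
      (rayPoly q ((1 : ℝ) / w)).eval x := by
    have agree : Set.EqOn
        (fun s => ∏ η ∈ nthRootsFinset q.natDegree (1 : ℂ), (x - η * y (η * w) s))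
        (fun s => (rayPoly q (s / w)).eval x) (Set.Ico 0 1) := fun s hs => by
      simpa [eval_prod] using congr_arg (eval x) (prod_X_sub_C_isRay_eq hq hD hρ crit hy hw hs)
    have family : IsMonicFamily (fun s : ℝ => rayPoly q (s / w)) q.natDegree :=
      IsMonicFamily.rayPoly ⟨fun _ => hq, fun _ => rfl, fun _ => continuous_const⟩ hD (by fun_prop)
    refine agree.of_subset_closure (continuousOn_finsetProd _ fun η hη => ?_)
      (family.continuous_eval.comp (by fun_prop : Continuous fun s : ℝ => (s, x))).continuousOn
      Set.Ico_subset_Icc_self (closure_Ico zero_ne_one).ge ⟨zero_le_one, le_rfl⟩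
    exact continuousOn_const.sub (continuousOn_const.mul
      (hy _ ((norm_mul_of_mem_nthRootsFinset_one hη w).trans hw)).continuousOn)
  refine Polynomial.funext fun x => ?_
  calc eval x (∏ η ∈ nthRootsFinset q.natDegree (1 : ℂ), (X - C (η * w * y (η * w) 1)))
    _ = ∏ η ∈ nthRootsFinset q.natDegree (1 : ℂ), w * (w⁻¹ * x - η * y (η * w) 1) := by
      rw [eval_prod]
      exact Finset.prod_congr rfl fun η _ => by simp only [eval_sub, eval_X, eval_C]; field_simp
    _ = w ^ q.natDegree * (rayPoly q w⁻¹).eval (w⁻¹ * x) := by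
      rw [Finset.prod_mul_distrib, limit, Finset.prod_const,
        (Complex.isPrimitiveRoot_exp _ hD).card_nthRootsFinset, Complex.ofReal_one, one_div]
    _ = eval x (q - C (w ^ q.natDegree)) := by
      rw [eval_rayPoly_mul, mul_sub, ← mul_assoc, ← mul_pow, mul_inv_cancel₀ w_ne]
      simp

end SinglePolynomial

/-- `lam (p, w)` is the landing point, on the level `‖w‖ = ρ`, of the external ray of `Q p` in
the direction of `w`; `D` is the degree and `ℓ` the leading coefficient of the `Q p`. -/
structure IsRayLanding (Q : S → ℂ[X]) (D : ℕ) (ℓ : ℂ) (ρ : ℝ) (lam : S × ℂ → ℂ) : Prop where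
  continuousOn : ContinuousOn lam (Set.univ ×ˢ Metric.sphere 0 ρ)
  prod_eq (p : S) {w : ℂ} (hw : ‖w‖ = ρ) :
    C ℓ * ∏ η ∈ nthRootsFinset D (1 : ℂ), (X - C (lam (p, η * w))) = Q p - C (ℓ * w ^ D)

theorem exists_isRayLanding [T2Space S] {ℓ : ℂ} (hℓ : ℓ ≠ 0) (hD : D ≠ 0) (hρ : 0 < ρ)
    (leadingCoeff : ∀ p, (Q p).leadingCoeff = ℓ) (natDegree : ∀ p, (Q p).natDegree = D)
    (cont : ∀ n, Continuous fun p => (Q p).coeff n)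
    (crit : ∀ p z, (derivative (Q p)).IsRoot z → ‖(Q p).eval z‖ ≤ ‖ℓ‖ * ρ ^ D) :
    ∃ lam : S × ℂ → ℂ, IsRayLanding Q D ℓ ρ lam := by
  have monic : IsMonicFamily (fun p => C ℓ⁻¹ * Q p) D :=
    { monic p := by simp [Monic, leadingCoeff, hℓ]
      natDegree_eq p := by rw [natDegree_C_mul (inv_ne_zero hℓ), natDegree]
      continuous_coeff n := by simpa only [coeff_C_mul] using (cont n).const_mul ℓ⁻¹ }
  have crit' (p : S) (z : ℂ) (hz : (derivative (C ℓ⁻¹ * Q p)).IsRoot z) :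
      ‖(C ℓ⁻¹ * Q p).eval z‖ ≤ ρ ^ D := by
    rw [eval_mul, eval_C, norm_mul, norm_inv, inv_mul_le_iff₀ (norm_pos_iff.2 hℓ)]
    exact crit p z (by simpa [hℓ] using hz)
  obtain ⟨y, cont_y, hy⟩ := exists_isRay monic hD hρ crit'
  refine ⟨fun x => x.2 * y x 1, continuousOn_snd.mul cont_y, fun p w hw => ?_⟩
  have := prod_X_sub_C_landing_eq (monic.monic p) (by rwa [monic.natDegree_eq]) hρ
    (by simpa only [monic.natDegree_eq] using crit' p) (hy p) hw
  rw [monic.natDegree_eq] at this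
  rw [this, mul_sub, ← mul_assoc, ← C_mul, ← C_mul, mul_inv_cancel₀ hℓ, C_1, one_mul]

end RayLanding

section Landing

variable {S : Type*} [TopologicalSpace S] {Q : S → ℂ[X]} {D : ℕ} {ℓ : ℂ} {ρ : ℝ} {lam : S × ℂ → ℂ}

open Classical in
lemma IsRayLanding.card_filter_eq (h : IsRayLanding Q D ℓ ρ lam) (hℓ : ℓ ≠ 0) (p : S) {w : ℂ}
    (hw : ‖w‖ = ρ) (z : ℂ) :
    ((nthRootsFinset D (1 : ℂ)).filter fun η => lam (p, η * w) = z).card =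
      (Q p - C (ℓ * w ^ D)).rootMultiplicity z := by
  have prod_eq : ∏ η ∈ nthRootsFinset D (1 : ℂ), (X - C (lam (p, η * w))) =
      (((nthRootsFinset D (1 : ℂ)).val.map fun η => lam (p, η * w)).map fun a => X - C a).prod := by
    rw [Multiset.map_map]
    rfl
  rw [← h.prod_eq p hw, ← count_roots, roots_C_mul _ hℓ, prod_eq, roots_multiset_prod_X_sub_C,
    Multiset.count_map, Finset.card_def, Finset.filter_val]
  exact congr_arg _ (Multiset.filter_congr fun _ _ => eq_comm)

lemma IsRayLanding.continuousWithinAt_rotate (h : IsRayLanding Q D ℓ ρ lam) (p : S) {w : ℂ}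
    (hw : ‖w‖ = ρ) {η : ℂ} (hη : η ∈ nthRootsFinset D (1 : ℂ)) :
    ContinuousWithinAt (fun x : S × ℂ => lam (x.1, η * x.2)) (Set.univ ×ˢ Metric.sphere 0 ρ)
      (p, w) := by
  have maps : Set.MapsTo (fun x : S × ℂ => (x.1, η * x.2)) (Set.univ ×ˢ Metric.sphere 0 ρ)
      (Set.univ ×ˢ Metric.sphere 0 ρ) := fun x hx =>
    ⟨trivial, mem_sphere_zero_iff_norm.2 ((norm_mul_of_mem_nthRootsFinset_one hη _).trans
      (mem_sphere_zero_iff_norm.1 hx.2))⟩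
  exact (h.continuousOn.comp (by fun_prop) maps) (p, w) ⟨trivial, by simpa using hw⟩

lemma IsRayLanding.eval_landing (h : IsRayLanding Q D ℓ ρ lam) (hD : D ≠ 0) (p : S) {w : ℂ}
    (hw : ‖w‖ = ρ) : (Q p).eval (lam (p, w)) = ℓ * w ^ D := by
  have one_mem : (1 : ℂ) ∈ nthRootsFinset D (1 : ℂ) :=
    one_mem_nthRootsFinset (Nat.pos_of_ne_zero hD)
  have := congr_arg (eval (lam (p, w))) (h.prod_eq p hw)
  rw [eval_mul, eval_prod, Finset.prod_eq_zero one_mem (by simp), mul_zero, eval_sub,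
    eval_C] at this
  exact (sub_eq_zero.1 this.symm)

/-- `c p` is a point of constant multiplicity `μ` of `Q p` over a value of modulus `‖ℓ‖ * ρ ^ D`,
depending continuously on `p`. -/
structure IsLevelPoint (Q : S → ℂ[X]) (D : ℕ) (ℓ : ℂ) (ρ : ℝ) (μ : ℕ) (c : S → ℂ) : Prop where
  continuous : Continuous c
  norm_eval (p : S) : ‖(Q p).eval (c p)‖ = ‖ℓ‖ * ρ ^ D
  rootMultiplicity (p : S) : (Q p - C ((Q p).eval (c p))).rootMultiplicity (c p) = μ

variable {c : S → ℂ} {μ : ℕ}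

lemma IsLevelPoint.norm_eq (hc : IsLevelPoint Q D ℓ ρ μ c) (hℓ : ℓ ≠ 0) (hD : D ≠ 0) (hρ : 0 ≤ ρ)
    {p : S} {w : ℂ} (hw : ℓ * w ^ D = (Q p).eval (c p)) : ‖w‖ = ρ := by
  have := hc.norm_eval p
  rw [← hw, norm_mul, norm_pow, mul_right_inj' (norm_ne_zero_iff.2 hℓ)] at this
  exact (pow_left_inj₀ (norm_nonneg _) hρ hD).1 this

open Classical in
lemma IsLevelPoint.card_filter_eq (hc : IsLevelPoint Q D ℓ ρ μ c) (h : IsRayLanding Q D ℓ ρ lam)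
    (hℓ : ℓ ≠ 0) (hD : D ≠ 0) (hρ : 0 ≤ ρ) {p : S} {w : ℂ} (hw : ℓ * w ^ D = (Q p).eval (c p)) :
    ((nthRootsFinset D (1 : ℂ)).filter fun η => lam (p, η * w) = c p).card = μ := by
  rw [h.card_filter_eq hℓ p (hc.norm_eq hℓ hD hρ hw), hw, hc.rootMultiplicity]

lemma IsLevelPoint.exists_landing_eq (hc : IsLevelPoint Q D ℓ ρ μ c)
    (h : IsRayLanding Q D ℓ ρ lam) (hℓ : ℓ ≠ 0) (hD : D ≠ 0) (hρ : 0 ≤ ρ) (hμ : μ ≠ 0) (p : S) :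
    ∃ w, ‖w‖ = ρ ∧ lam (p, w) = c p := by
  classical
  obtain ⟨w, hw⟩ := IsAlgClosed.exists_pow_nat_eq (ℓ⁻¹ * (Q p).eval (c p)) (Nat.pos_of_ne_zero hD)
  replace hw : ℓ * w ^ D = (Q p).eval (c p) := by rw [hw, mul_inv_cancel_left₀ hℓ]
  obtain ⟨η, hη⟩ := Finset.card_ne_zero.1 ((hc.card_filter_eq h hℓ hD hρ hw).trans_ne hμ)
  obtain ⟨hη, landing⟩ := Finset.mem_filter.1 hη
  exact ⟨η * w, (norm_mul_of_mem_nthRootsFinset_one hη w).trans (hc.norm_eq hℓ hD hρ hw), landing⟩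

-- The rays landing at `c p` are constant in number, and by continuity a ray landing elsewhere
-- cannot jump to `c p`.
lemma IsLevelPoint.eventually_landing_eq (hc : IsLevelPoint Q D ℓ ρ μ c)
    (h : IsRayLanding Q D ℓ ρ lam) (hℓ : ℓ ≠ 0) (hD : D ≠ 0) (hρ : 0 ≤ ρ) {p₀ : S} {w₀ : ℂ}
    (hw₀ : ‖w₀‖ = ρ) (landing : lam (p₀, w₀) = c p₀) :
    ∀ᶠ x in 𝓝 (p₀, w₀), ℓ * x.2 ^ D = (Q x.1).eval (c x.1) → lam x = c x.1 := by
  classical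
  have value₀ : ℓ * w₀ ^ D = (Q p₀).eval (c p₀) := by rw [← landing, h.eval_landing hD p₀ hw₀]
  have stays_off : ∀ᶠ x in 𝓝[Set.univ ×ˢ Metric.sphere 0 ρ] (p₀, w₀),
      ∀ η ∈ nthRootsFinset D (1 : ℂ), lam (p₀, η * w₀) ≠ c p₀ → lam (x.1, η * x.2) ≠ c x.1 := by
    refine (Filter.eventually_all_finset _).2 fun η hη =>
      eventually_imp_distrib_left.2 fun off => ?_
    exact ((h.continuousWithinAt_rotate p₀ hw₀ hη).prodMk
      (hc.continuous.comp continuous_fst).continuousWithinAt).eventually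
      (isOpen_ne_fun continuous_fst continuous_snd |>.mem_nhds off)
  filter_upwards [eventually_nhdsWithin_iff.1 stays_off] with x stays_off value
  replace stays_off := stays_off ⟨trivial, by simpa using hc.norm_eq hℓ hD hρ value⟩
  have filter_eq := Finset.eq_of_subset_of_card_le
    (fun η hη => Finset.mem_filter.2 ⟨(Finset.mem_filter.1 hη).1,
      not_imp_not.1 (stays_off η (Finset.mem_filter.1 hη).1) (Finset.mem_filter.1 hη).2⟩)
    ((hc.card_filter_eq h hℓ hD hρ value₀).trans (hc.card_filter_eq h hℓ hD hρ value).symm).le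
  have one_mem : (1 : ℂ) ∈ (nthRootsFinset D (1 : ℂ)).filter fun η => lam (p₀, η * w₀) = c p₀ :=
    Finset.mem_filter.2 ⟨one_mem_nthRootsFinset (Nat.pos_of_ne_zero hD), by rwa [one_mul]⟩
  rw [← filter_eq, Finset.mem_filter, one_mul] at one_mem
  exact one_mem.2

lemma IsLevelPoint.isClopen_setOf_landing_eq (hc : IsLevelPoint Q D ℓ ρ μ c)
    (h : IsRayLanding Q D ℓ ρ lam) (hℓ : ℓ ≠ 0) (hD : D ≠ 0) {w : ℂ} (hw : ‖w‖ = ρ)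
    (value : ∀ p, (Q p).eval (c p) = ℓ * w ^ D) : IsClopen {p | lam (p, w) = c p} := by
  refine ⟨isClosed_eq (h.continuousOn.comp_continuous (by fun_prop) fun p =>
    ⟨trivial, by simpa using hw⟩) hc.continuous, isOpen_iff_mem_nhds.2 fun p landing => ?_⟩
  have tendsto : Tendsto (fun p' => (p', w)) (𝓝 p) (𝓝 (p, w)) := Continuous.tendsto (by fun_prop) p
  filter_upwards [tendsto.eventually (hc.eventually_landing_eq h hℓ hD (hw ▸ norm_nonneg w) hw
    landing)] with p' hp'
  exact hp' (value p').symm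

theorem IsLevelPoint.exists_mem_landing_eq [CompactSpace S] (hc : IsLevelPoint Q D ℓ ρ μ c)
    (h : IsRayLanding Q D ℓ ρ lam) (hℓ : ℓ ≠ 0) (hD : D ≠ 0) (hμ : μ ≠ 0)
    (surj : ∀ p, 𝓝[Metric.sphere 0 (‖ℓ‖ * ρ ^ D)] ((Q p).eval (c p)) ≤
      map (fun p => (Q p).eval (c p)) (𝓝 p))
    {G : Set S} (hG : IsClopen G) (nonempty : G.Nonempty) {w : ℂ} (hw : ‖w‖ = ρ) :
    ∃ p ∈ G, lam (p, w) = c p := by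
  have hρ : 0 ≤ ρ := hw ▸ norm_nonneg w
  have : PreconnectedSpace (Metric.sphere (0 : ℂ) ρ) :=
    Subtype.preconnectedSpace (isPreconnected_sphere (by simp) 0 ρ)
  let swept : Set (Metric.sphere (0 : ℂ) ρ) := {w | ∃ p ∈ G, lam (p, w) = c p}
  have isClosed_swept : IsClosed swept := by
    have cont : Continuous fun x : S × Metric.sphere (0 : ℂ) ρ => lam (x.1, x.2) :=
      h.continuousOn.comp_continuous (by fun_prop) fun x => ⟨trivial, x.2.2⟩
    convert isClosedMap_snd_of_compactSpace _ ((hG.isClosed.preimage continuous_fst).inter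
      (isClosed_eq cont (hc.continuous.comp continuous_fst))) using 1
    ext w
    simp [swept]
  have isOpen_swept : IsOpen swept := by
    refine isOpen_iff_mem_nhds.2 fun w ⟨p, hp, landing⟩ => ?_
    have norm_w : ‖(w : ℂ)‖ = ρ := by simp
    obtain ⟨U, hU, V, hV, hUV⟩ := mem_nhds_prod_iff.1
      (hc.eventually_landing_eq h hℓ hD hρ norm_w landing)
    have tendsto : Tendsto (fun w' : Metric.sphere (0 : ℂ) ρ => ℓ * (w' : ℂ) ^ D) (𝓝 w)
        (𝓝[Metric.sphere 0 (‖ℓ‖ * ρ ^ D)] ((Q p).eval (c p))) := by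
      rw [← landing, h.eval_landing hD p norm_w]
      exact tendsto_nhdsWithin_iff.2
        ⟨Continuous.tendsto (by fun_prop) w, Eventually.of_forall fun w' => by simp⟩
    filter_upwards [tendsto (surj p (image_mem_map (inter_mem hU (hG.isOpen.mem_nhds hp)))),
      continuous_subtype_val.continuousAt.eventually hV] with w' ⟨p', ⟨hp'U, hp'G⟩, value⟩ hw'
    exact ⟨p', hp'G, hUV (Set.mk_mem_prod hp'U hw') value.symm⟩
  have nonempty_swept : swept.Nonempty := by
    obtain ⟨p, hp⟩ := nonempty
    obtain ⟨w, norm_w, landing⟩ := hc.exists_landing_eq h hℓ hD hρ hμ p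
    exact ⟨⟨w, by simpa using norm_w⟩, p, hp, landing⟩
  have swept_eq : swept = Set.univ :=
    IsClopen.eq_univ ⟨isClosed_swept, isOpen_swept⟩ nonempty_swept
  exact Set.eq_univ_iff_forall.1 swept_eq ⟨w, by simpa using hw⟩

end Landing

section ProperOpen

lemma image_eq_univ_of_isClopen {X Y : Type*} [TopologicalSpace X] [TopologicalSpace Y]
    [PreconnectedSpace Y] {f : X → Y} (proper : IsProperMap f) (isOpenMap : IsOpenMap f) {A : Set X}
    (hA : IsClopen A) (nonempty : A.Nonempty) : f '' A = Set.univ :=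
  IsClopen.eq_univ ⟨proper.isClosedMap A hA.isClosed, isOpenMap A hA.isOpen⟩ (nonempty.image f)

lemma exists_mem_eq_of_isClopen {X τ : Type*} [TopologicalSpace X] [Fintype τ] {f : X → τ → ℂ}
    {r : ℝ} (proper : IsProperMap f) (isOpenMap : IsOpenMap f)
    {A : Set (f ⁻¹' Metric.ball 0 r)} (hA : IsClopen A) (nonempty : A.Nonempty) {y : τ → ℂ}
    (hy : ‖y‖ < r) : ∃ p ∈ A, f p = y := by
  have : PreconnectedSpace (Metric.ball (0 : τ → ℂ) r) :=
    Subtype.preconnectedSpace (convex_ball 0 r).isPreconnected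
  have image_eq := image_eq_univ_of_isClopen (proper.restrictPreimage _)
    (isOpenMap.restrictPreimage _) hA nonempty
  obtain ⟨p, hp, eq⟩ := Set.eq_univ_iff_forall.1 image_eq ⟨y, by simpa using hy⟩
  exact ⟨p, hp, congr_arg Subtype.val eq⟩

variable {X τ : Type*} [Fintype τ] [DecidableEq τ] {f : X → τ → ℂ} {r : ℝ}

/-- The points of `A` whose image under `f` has all coordinates but the `j`-th equal to those of
`y`, while the `j`-th runs through the circle of radius `R`. -/
def circleSlice (f : X → τ → ℂ) (A : Set (f ⁻¹' Metric.ball 0 r)) (y : τ → ℂ) (j : τ) (R : ℝ) :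
    Set (f ⁻¹' Metric.ball 0 r) :=
  {p | p ∈ A ∧ ∃ θ : ℂ, ‖θ‖ = R ∧ f p = Function.update y j θ}

variable {A : Set (f ⁻¹' Metric.ball 0 r)} {y : τ → ℂ} {j : τ} {R : ℝ}

lemma norm_update_le (hy : ‖y‖ ≤ R) {θ : ℂ} (hθ : ‖θ‖ ≤ R) : ‖Function.update y j θ‖ ≤ R := by
  refine (pi_norm_le_iff_of_nonneg ((norm_nonneg y).trans hy)).2 fun i => ?_
  obtain rfl | ne := eq_or_ne i j
  · rwa [Function.update_self]
  · rw [Function.update_of_ne ne]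
    exact (norm_le_pi_norm y i).trans hy

lemma norm_le_of_mem_circleSlice (hy : ‖y‖ ≤ R) (p : circleSlice f A y j R) : ‖f p.1‖ ≤ R := by
  obtain ⟨-, θ, hθ, eq⟩ := p.2
  exact eq ▸ norm_update_le hy hθ.le

lemma norm_apply_eq_of_mem_circleSlice (p : circleSlice f A y j R) : ‖f p.1 j‖ = R := by
  obtain ⟨-, θ, hθ, eq⟩ := p.2
  rw [eq, Function.update_self, hθ]

lemma apply_eq_of_mem_circleSlice (p : circleSlice f A y j R) {i : τ} (hi : i ≠ j) :
    f p.1 i = y i := by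
  obtain ⟨-, θ, -, eq⟩ := p.2
  rw [eq, Function.update_of_ne hi]

variable [TopologicalSpace X]

lemma isCompact_circleSlice (proper : IsProperMap f) (hA : IsClopen A) (hy : ‖y‖ ≤ R) (hR : R < r) :
    IsCompact (circleSlice f A y j R) := by
  have subset : Function.update y j '' Metric.sphere 0 R ⊆ Metric.ball 0 r := by
    rintro _ ⟨θ, hθ, rfl⟩
    simpa using (norm_update_le hy (mem_sphere_zero_iff_norm.1 hθ).le).trans_lt hR
  have compact : IsCompact (Subtype.val ⁻¹' (Function.update y j '' Metric.sphere 0 R) :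
      Set (Metric.ball (0 : τ → ℂ) r)) :=
    (Topology.IsInducing.subtypeVal.isCompact_preimage_iff (by rwa [Subtype.range_coe])).2
      ((isCompact_sphere 0 R).image (by fun_prop))
  convert ((proper.restrictPreimage (Metric.ball 0 r)).isCompact_preimage compact).inter_left
    hA.isClosed using 1
  ext p
  simp [circleSlice, eq_comm]

lemma nonempty_circleSlice (proper : IsProperMap f) (isOpenMap : IsOpenMap f) (hA : IsClopen A)
    (nonempty : A.Nonempty) (hy : ‖y‖ ≤ R) (hR : R < r) :
    (circleSlice f A y j R).Nonempty := by
  have norm_R : ‖(R : ℂ)‖ = R := by simpa using (norm_nonneg y).trans hy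
  obtain ⟨p, hp, eq⟩ := exists_mem_eq_of_isClopen proper isOpenMap hA nonempty
    ((norm_update_le (j := j) hy norm_R.le).trans_lt hR)
  exact ⟨p, hp, R, norm_R, eq⟩

lemma nhdsWithin_sphere_le_map_circleSlice (cont : Continuous f) (isOpenMap : IsOpenMap f)
    (hA : IsOpen A) (p : circleSlice f A y j R) :
    𝓝[Metric.sphere 0 R] (f p.1 j) ≤ map (fun p : circleSlice f A y j R => f p.1 j) (𝓝 p) := by
  intro U hU
  obtain ⟨V, hV, hVU⟩ := mem_nhds_subtype _ _ _ |>.1 (mem_map.1 hU)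
  have open_val : IsOpenMap fun p : f ⁻¹' Metric.ball 0 r => f p :=
    isOpenMap.comp (Metric.isOpen_ball.preimage cont).isOpenMap_subtype_val
  have image_mem := open_val.image_mem_nhds (inter_mem hV (hA.mem_nhds p.2.1))
  have tendsto : Tendsto (Function.update (f p.1) j) (𝓝 (f p.1 j)) (𝓝 (f p.1)) := by
    have : Continuous (Function.update (f p.1) j) := by fun_prop
    simpa using this.tendsto (f p.1 j)
  filter_upwards [mem_nhdsWithin_of_mem_nhds (tendsto image_mem), self_mem_nhdsWithin]
    with θ ⟨p', ⟨hp'V, hp'A⟩, (eq : f p' = _)⟩ hθ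
  obtain ⟨-, θ₀, -, eq₀⟩ := p.2
  have mem : p' ∈ circleSlice f A y j R :=
    ⟨hp'A, θ, by simpa using hθ, by rw [eq, eq₀, Function.update_idem]⟩
  have : f p' j ∈ U := @hVU ⟨p', mem⟩ hp'V
  rwa [eq, Function.update_self] at this

end ProperOpen

section CritOrbitMap

variable {ι : Type*} [Fintype ι] {e N : ℕ}

lemma polyMap_critOrbitPoly (e N : ℕ) : polyMap (critOrbitPoly ι e N) = critOrbit e N :=
  funext₂ (eval_critOrbitPoly e N)

lemma continuous_critOrbit (e N : ℕ) :
    Continuous (critOrbit e N : (Option ι → ℂ) → Option ι → ℂ) :=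
  polyMap_critOrbitPoly (ι := ι) e N ▸ continuous_polyMap _

lemma isProperMap_critOrbit (e : ℕ) (hN : N ≠ 0) :
    IsProperMap (critOrbit e N : (Option ι → ℂ) → Option ι → ℂ) :=
  have integral := isIntegral_critOrbitPoly (ι := ι) e hN
  polyMap_critOrbitPoly (ι := ι) e N ▸
    isProperMap_polyMap integral (algebraicIndependent_of_isIntegral_aeval integral)

lemma isOpenMap_critOrbit (e : ℕ) (hN : N ≠ 0) :
    IsOpenMap (critOrbit e N : (Option ι → ℂ) → Option ι → ℂ) :=
  have integral := isIntegral_critOrbitPoly (ι := ι) e hN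
  polyMap_critOrbitPoly (ι := ι) e N ▸
    isOpenMap_polyMap integral (algebraicIndependent_of_isIntegral_aeval integral)

lemma critOrbit_zero (e : ℕ) (q : Option ι → ℂ) : critOrbit e 0 q = crit q := rfl

lemma critOrbit_add (e m n : ℕ) (q : Option ι → ℂ) (j : Option ι) :
    critOrbit e (m + n) q j = (fun z => (poly e q).eval z)^[m] (critOrbit e n q j) :=
  Function.iterate_add_apply _ m n _

lemma critOrbit_succ (e n : ℕ) (q : Option ι → ℂ) (j : Option ι) :
    critOrbit e (n + 1) q j = (poly e q).eval (critOrbit e n q j) :=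
  Function.iterate_succ_apply' _ n _

lemma critOrbit_one_smul (e : ℕ) (u : ℂ) (q : Option ι → ℂ) :
    critOrbit e 1 (u • q) = u ^ polyDegree ι e • critOrbit e 1 q := by
  funext j
  simp only [critOrbit_succ, critOrbit_zero, crit_smul, eval_poly_smul, Pi.smul_apply, smul_eq_mul]

end CritOrbitMap

section Escape

lemma exists_pos_mul_norm_pow_le {E F : Type*} [NormedAddCommGroup E] [NormedSpace ℂ E]
    [ProperSpace E] [NormedAddCommGroup F] [NormedSpace ℂ F] {f : E → F} (cont : Continuous f)
    {n : ℕ} (hn : n ≠ 0) (map_smul : ∀ (u : ℂ) x, f (u • x) = u ^ n • f x)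
    (eq_zero : ∀ x, f x = 0 → x = 0) : ∃ δ > 0, ∀ x, δ * ‖x‖ ^ n ≤ ‖f x‖ := by
  obtain ⟨δ, hδ, hf⟩ := (isCompact_sphere (0 : E) 1).exists_forall_le' cont.norm.continuousOn
    (a := 0) fun x hx => norm_pos_iff.2 fun h => by simp [eq_zero x h] at hx
  refine ⟨δ, hδ, fun x => ?_⟩
  obtain rfl | hx := eq_or_ne x 0
  · simp [hn]
  have hx' : (‖x‖ : ℂ) ≠ 0 := by simpa using hx
  calc δ * ‖x‖ ^ n ≤ ‖f ((‖x‖ : ℂ)⁻¹ • x)‖ * ‖x‖ ^ n := by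
        gcongr
        exact hf _ (by simp [norm_smul, hx])
    _ = ‖f x‖ := by
        conv_rhs => rw [← smul_inv_smul₀ hx' x, map_smul]
        simp [norm_smul, mul_comm]

variable {ι : Type*} [Fintype ι] {e N : ℕ} {R M : ℝ}

lemma exists_pos_mul_norm_pow_le_critOrbit (e : ℕ) :
    ∃ δ > 0, ∀ q : Option ι → ℂ, δ * ‖q‖ ^ polyDegree ι e ≤ ‖critOrbit e 1 q‖ :=
  exists_pos_mul_norm_pow_le (continuous_critOrbit e 1) (polyDegree_ne_zero ι e)
    (critOrbit_one_smul e)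
    fun _ h => eq_zero_of_eval_poly_crit_eq_zero fun j => congr_fun h j

lemma eventually_lt_norm_eval_one_poly (e : ℕ) :
    ∀ᶠ q : Option ι → ℂ in 𝓝 0, (2 * polyDegree ι e : ℝ)⁻¹ < ‖(poly e q).eval 1‖ := by
  have eval_eq (q : Option ι → ℂ) : (poly e q).eval 1 =
      MvPolynomial.eval q ((poly e MvPolynomial.X).eval 1) := by
    rw [← eval_poly_comp, map_one]
    congr 2
    funext j
    simp
  have cont : Continuous fun q : Option ι → ℂ => ‖(poly e q).eval 1‖ := by
    simp only [eval_eq]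
    exact (MvPolynomial.continuous_eval _).norm
  refine cont.continuousAt.eventually_const_lt ?_
  have : (0 : ℝ) < polyDegree ι e := Nat.cast_pos.2 (Nat.pos_of_ne_zero (polyDegree_ne_zero ι e))
  change _ < ‖(poly e (0 : Option ι → ℂ)).eval 1‖
  rw [eval_poly_zero, one_pow, mul_one]
  simp only [map_inv₀, map_natCast, norm_inv, Complex.norm_natCast]
  gcongr
  linarith

lemma exists_two_mul_norm_le_norm_eval_poly (e : ℕ) :
    ∃ K : ℝ, 1 ≤ K ∧ ∀ (q : Option ι → ℂ) (z : ℂ), K ≤ ‖z‖ → K * ‖q‖ ≤ ‖z‖ →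
      2 * ‖z‖ ≤ ‖(poly e q).eval z‖ := by
  obtain ⟨ε, hε, lt_eval⟩ :=
    Metric.eventually_nhds_iff.1 (eventually_lt_norm_eval_one_poly (ι := ι) e)
  set D := polyDegree ι e with hD
  have one_le_D : (1 : ℝ) ≤ D :=
    Nat.one_le_cast.2 (Nat.one_le_iff_ne_zero.2 (polyDegree_ne_zero ι e))
  refine ⟨max (4 * D) (2 / ε), le_max_of_le_left (by linarith), fun q z hz hqz => ?_⟩
  have D_le : 4 * D ≤ ‖z‖ := (le_max_left _ _).trans hz
  have norm_pos : 0 < ‖z‖ := by linarith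
  have z_ne : z ≠ 0 := norm_pos_iff.1 norm_pos
  have scaled_lt : ‖z⁻¹ • q‖ < ε := by
    have : 2 / ε * ‖q‖ ≤ ‖z‖ :=
      (mul_le_mul_of_nonneg_right (le_max_right _ _) (norm_nonneg q)).trans hqz
    rw [div_mul_eq_mul_div, div_le_iff₀ hε] at this
    rw [norm_smul, norm_inv, inv_mul_lt_iff₀ norm_pos]
    nlinarith [mul_pos norm_pos hε]
  have scale : (poly e q).eval z = z ^ D * (poly e (z⁻¹ • q)).eval 1 := by
    rw [← eval_poly_smul, smul_inv_smul₀ z_ne, mul_one]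
  calc 2 * ‖z‖ = ‖z‖ * (4 * D) * (2 * D : ℝ)⁻¹ := by field_simp; norm_num
    _ ≤ ‖z‖ * ‖z‖ * (2 * D : ℝ)⁻¹ := by gcongr
    _ ≤ ‖z‖ ^ D * ‖(poly e (z⁻¹ • q)).eval 1‖ := by
      rw [← sq]
      gcongr
      · linarith
      · simp [hD, polyDegree]
      · exact (lt_eval (by rwa [dist_zero_right])).le
    _ = ‖(poly e q).eval z‖ := by rw [scale, norm_mul, norm_pow]

/-- `R` is an escape radius for all parameters of norm at most `M`, and every parameter of larger
norm has an escaping critical point. -/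
structure IsEscapeRadius (ι : Type*) [Fintype ι] (e : ℕ) (R M : ℝ) : Prop where
  pos : 0 < R
  two_mul_norm_le {q : Option ι → ℂ} {z : ℂ} (hq : ‖q‖ ≤ M) (hz : R ≤ ‖z‖) :
    2 * ‖z‖ ≤ ‖(poly e q).eval z‖
  exists_le_norm {q : Option ι → ℂ} (hq : M < ‖q‖) :
    ∃ j, ∀ n : ℕ, 2 ^ (n + 1) * R ≤ ‖critOrbit e (n + 1) q j‖

theorem exists_isEscapeRadius (ι : Type*) [Fintype ι] (e : ℕ) : ∃ R M, IsEscapeRadius ι e R M := by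
  obtain ⟨δ, hδ, first_le⟩ := exists_pos_mul_norm_pow_le_critOrbit (ι := ι) e
  obtain ⟨K, hK, escape⟩ := exists_two_mul_norm_le_norm_eval_poly (ι := ι) e
  let M := max 1 (2 * K / δ)
  have one_le_M : 1 ≤ M := le_max_left _ _
  refine ⟨K * M, M, by positivity, fun {q z} hq hz => ?_, fun {q} hq => ?_⟩
  · exact escape q z (by nlinarith) ((by gcongr : K * ‖q‖ ≤ K * M).trans hz)
  have one_le : 1 ≤ ‖q‖ := one_le_M.trans hq.le
  obtain ⟨j, hj⟩ := Finite.exists_max fun j => ‖critOrbit e 1 q j‖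
  have norm_le : ‖critOrbit e 1 q‖ ≤ ‖critOrbit e 1 q j‖ :=
    (pi_norm_le_iff_of_nonneg (norm_nonneg _)).2 hj
  have K_le : 2 * K ≤ δ * ‖q‖ := by
    have : 2 * K / δ < ‖q‖ := (le_max_right _ _).trans_lt hq
    rw [div_lt_iff₀' hδ] at this
    exact this.le
  have growth (n : ℕ) : 2 ^ (n + 1) * (K * ‖q‖) ≤ ‖critOrbit e (n + 1) q j‖ := by
    induction n with
    | zero =>
      calc 2 ^ (0 + 1) * (K * ‖q‖) = 2 * K * ‖q‖ := by ring
        _ ≤ δ * ‖q‖ * ‖q‖ := by gcongr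
        _ = δ * ‖q‖ ^ 2 := by ring
        _ ≤ δ * ‖q‖ ^ polyDegree ι e := by gcongr; simp [polyDegree]
        _ ≤ _ := (first_le q).trans norm_le
    | succ n ih =>
      have one_le_two_pow : (1 : ℝ) ≤ 2 ^ (n + 1) := one_le_pow₀ one_le_two
      have le_norm : K * ‖q‖ ≤ ‖critOrbit e (n + 1) q j‖ :=
        (le_mul_of_one_le_left (by positivity) one_le_two_pow).trans ih
      rw [critOrbit_succ e (n + 1)]
      have := escape q _ ((le_mul_of_one_le_right (by linarith) one_le).trans le_norm) le_norm
      rw [pow_succ]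
      linarith
  exact ⟨j, fun n => (by gcongr : 2 ^ (n + 1) * (K * M) ≤ _).trans (growth n)⟩

end Escape

section EscapeRadius

variable {ι : Type*} [Fintype ι] {e N : ℕ} {R M : ℝ} {q : Option ι → ℂ}

lemma IsEscapeRadius.two_pow_mul_norm_le_norm_iterate (h : IsEscapeRadius ι e R M)
    (hq : ‖q‖ ≤ M) {z : ℂ} (hz : R ≤ ‖z‖) (n : ℕ) :
    2 ^ n * ‖z‖ ≤ ‖(fun z => (poly e q).eval z)^[n] z‖ := by
  induction n with
  | zero => simp
  | succ n ih =>
    have le_iterate := (le_mul_of_one_le_left (norm_nonneg z) (one_le_pow₀ one_le_two)).trans ih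
    rw [Function.iterate_succ_apply', pow_succ', mul_assoc]
    linarith [h.two_mul_norm_le hq (hz.trans le_iterate)]

lemma IsEscapeRadius.norm_critOrbit_lt (h : IsEscapeRadius ι e R M) (hq : ‖q‖ ≤ M) {j : Option ι}
    (hj : ‖critOrbit e N q j‖ ≤ R) {m : ℕ} (hm : m < N) : ‖critOrbit e m q j‖ < R := by
  by_contra! le_norm
  obtain ⟨n, rfl⟩ := Nat.exists_eq_add_of_lt hm
  have grown := h.two_pow_mul_norm_le_norm_iterate hq le_norm (n + 1)
  rw [← critOrbit_add, add_comm (n + 1), ← add_assoc] at grown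
  have : (1 : ℝ) ≤ 2 ^ n := one_le_pow₀ one_le_two
  rw [pow_succ'] at grown
  nlinarith [h.pos]

lemma IsEscapeRadius.norm_critOrbit_le (h : IsEscapeRadius ι e R M) (hq : ‖q‖ ≤ M) {j : Option ι}
    (hj : ‖critOrbit e N q j‖ ≤ R) {m : ℕ} (hm : m ≤ N) : ‖critOrbit e m q j‖ ≤ R :=
  hm.lt_or_eq.elim (fun hm => (h.norm_critOrbit_lt hq hj hm).le) fun hm => hm ▸ hj

lemma IsEscapeRadius.norm_le (h : IsEscapeRadius ι e R M) (hN : N ≠ 0)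
    (hq : critOrbit e N q ∈ Metric.ball 0 (2 * R)) : ‖q‖ ≤ M := by
  obtain ⟨n, rfl⟩ := Nat.exists_eq_succ_of_ne_zero hN
  by_contra! lt_norm
  obtain ⟨j, hj⟩ := h.exists_le_norm lt_norm
  have lt_two_mul := (norm_le_pi_norm _ j).trans_lt (mem_ball_zero_iff.1 hq)
  have : (1 : ℝ) ≤ 2 ^ n := one_le_pow₀ one_le_two
  have := (hj n).trans_lt lt_two_mul
  rw [pow_succ'] at this
  nlinarith [h.pos]

lemma IsEscapeRadius.not_isRoot_derivative_critOrbit (h : IsEscapeRadius ι e R M) (hq : ‖q‖ ≤ M)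
    (norm_le : ‖critOrbit e N q‖ ≤ R) {j : Option ι} (hj : ‖critOrbit e N q j‖ = R) {i : ℕ}
    (hi : i ≠ 0) (hiN : i ≤ N) : ¬ (derivative (poly e q)).IsRoot (critOrbit e i q j) := by
  rw [derivative_poly, isRoot_critPoly]
  rintro ⟨j', hj'⟩
  have := h.norm_critOrbit_lt hq ((norm_le_pi_norm _ j').trans norm_le) (m := N - i) (by omega)
  rw [← Nat.sub_add_cancel hiN, critOrbit_add, hj'] at hj
  exact this.ne hj

end EscapeRadius

section Iterate

lemma map_iterate_comp {A B : Type*} [CommSemiring A] [CommSemiring B] (φ : A →+* B) (P f : A[X])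
    (n : ℕ) : (P.comp^[n] f).map φ = (P.map φ).comp^[n] (f.map φ) :=
  Function.Semiconj.iterate_right (fun g => Polynomial.map_comp φ P g) n f

lemma leadingCoeff_iterate_comp {A : Type*} [CommRing A] [IsDomain A] {P f : A[X]}
    (hP : P.natDegree ≠ 0) (hf : f.natDegree ≠ 0) (n : ℕ) :
    (P.comp^[n] f).leadingCoeff =
      (fun a => P.leadingCoeff * a ^ P.natDegree)^[n] f.leadingCoeff := by
  induction n with
  | zero => rfl
  | succ n ih =>
    rw [Function.iterate_succ_apply', Function.iterate_succ_apply', leadingCoeff_comp, ih]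
    rw [natDegree_iterate_comp]
    exact mul_ne_zero (pow_ne_zero n hP) hf

lemma isRoot_derivative_iterate_comp {A : Type*} [CommRing A] [IsDomain A] {P f : A[X]} {n : ℕ}
    {z : A} : (derivative (P.comp^[n] f)).IsRoot z ↔ (derivative f).IsRoot z ∨
      ∃ i < n, (derivative P).IsRoot ((fun z => P.eval z)^[i] (f.eval z)) := by
  induction n with
  | zero => simp
  | succ n ih =>
    rw [Function.iterate_succ_apply', derivative_comp, root_mul, ih, or_assoc,
      Nat.exists_lt_succ_right, IsRoot.def (p := comp _ _), eval_comp, iterate_comp_eval]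
    rfl

lemma rootMultiplicity_derivative_iterate_comp {A : Type*} [CommRing A] [IsDomain A] {P f : A[X]}
    {n : ℕ} {z : A}
    (not_isRoot : ∀ i < n, ¬ (derivative P).IsRoot ((fun z => P.eval z)^[i] (f.eval z))) :
    (derivative (P.comp^[n] f)).rootMultiplicity z = (derivative f).rootMultiplicity z := by
  induction n with
  | zero => rfl
  | succ n ih =>
    have eval_ne : ¬ ((derivative P).comp (P.comp^[n] f)).IsRoot z := by
      rw [IsRoot.def, eval_comp, iterate_comp_eval]
      exact not_isRoot n n.lt_succ_self
    rw [Function.iterate_succ_apply', derivative_comp]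
    obtain zero | ne_zero := eq_or_ne (derivative (P.comp^[n] f)) 0
    · rw [← ih fun i hi => not_isRoot i (hi.trans n.lt_succ_self), zero, zero_mul]
    rw [rootMultiplicity_mul (mul_ne_zero ne_zero fun h => eval_ne (by simp [h])),
      rootMultiplicity_eq_zero eval_ne, add_zero,
      ih fun i hi => not_isRoot i (hi.trans n.lt_succ_self)]

lemma rootMultiplicity_sub_C_eval {A : Type*} [CommRing A] [IsDomain A] [CharZero A] {f : A[X]}
    (hf : f.natDegree ≠ 0) (z : A) :
    (f - C (f.eval z)).rootMultiplicity z = (derivative f).rootMultiplicity z + 1 := by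
  have isRoot : (f - C (f.eval z)).IsRoot z := by simp
  have ne_zero : f - C (f.eval z) ≠ 0 := fun h => hf (by rw [sub_eq_zero.1 h, natDegree_C])
  have := derivative_rootMultiplicity_of_root isRoot
  rw [derivative_sub, derivative_C, sub_zero] at this
  have := (rootMultiplicity_pos ne_zero).2 isRoot
  omega

variable {ι : Type*} [Fintype ι] {e : ℕ}

lemma continuous_coeff_iterate_comp_poly (e n : ℕ) (f : ℂ[X]) (i : ℕ) :
    Continuous fun q : Option ι → ℂ => ((poly e q).comp^[n] f).coeff i := by
  have coeff_eq (q : Option ι → ℂ) : ((poly e q).comp^[n] f).coeff i = MvPolynomial.eval q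
      (((poly e MvPolynomial.X).comp^[n] (f.map MvPolynomial.C)).coeff i) := by
    have eval_X : MvPolynomial.eval q ∘ MvPolynomial.X = q := funext MvPolynomial.eval_X
    have eval_C : (MvPolynomial.eval q).comp MvPolynomial.C = RingHom.id ℂ :=
      RingHom.ext MvPolynomial.eval_C
    rw [← coeff_map, map_iterate_comp, map_poly, Polynomial.map_map, eval_X, eval_C,
      Polynomial.map_id]
  simp only [coeff_eq]
  exact MvPolynomial.continuous_eval _

lemma exists_critOrbit_eq_of_isRoot_derivative {q : Option ι → ℂ} {f : ℂ[X]}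
    (crit_f : ∀ z, (derivative f).IsRoot z → ∃ j, f.eval z = crit q j) {n : ℕ} {z : ℂ}
    (hz : (derivative ((poly e q).comp^[n] f)).IsRoot z) :
    ∃ m ≤ n, ∃ j, ((poly e q).comp^[n] f).eval z = critOrbit e m q j := by
  rw [iterate_comp_eval]
  obtain hz | ⟨i, hi, hz⟩ := isRoot_derivative_iterate_comp.1 hz
  · obtain ⟨j, hj⟩ := crit_f z hz
    exact ⟨n, le_rfl, j, by rw [hj, critOrbit]⟩
  · rw [derivative_poly, isRoot_critPoly] at hz
    obtain ⟨j, hj⟩ := hz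
    refine ⟨n - i, Nat.sub_le n i, j, ?_⟩
    rw [critOrbit, ← hj, ← Function.iterate_add_apply, Nat.sub_add_cancel hi.le]

theorem exists_isRayLanding_iterate_comp_poly {S : Type*} [TopologicalSpace S] [T2Space S]
    {q : S → Option ι → ℂ} (cont : Continuous q) {R : ℝ} (hR : 0 < R) {n : ℕ}
    (norm_le : ∀ p, ∀ m ≤ n, ∀ j, ‖critOrbit e m (q p) j‖ ≤ R) {f : ℂ[X]} (hf : f.natDegree ≠ 0)
    (crit_f : ∀ p z, (derivative f).IsRoot z → ∃ j, f.eval z = crit (q p) j) :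
    ∃ ℓ ρ lam, ℓ ≠ 0 ∧ 0 ≤ ρ ∧ ‖ℓ‖ * ρ ^ (polyDegree ι e ^ n * f.natDegree) = R ∧
      IsRayLanding (fun p => (poly e (q p)).comp^[n] f) (polyDegree ι e ^ n * f.natDegree)
        ℓ ρ lam := by
  have polyDegree_ne : polyDegree ι e ≠ 0 := by simp [polyDegree]
  set D := polyDegree ι e ^ n * f.natDegree
  have D_ne : D ≠ 0 := mul_ne_zero (pow_ne_zero n polyDegree_ne) hf
  let a := algebraMap ℚ ℂ (polyDegree ι e : ℚ)⁻¹
  let ℓ := (fun b => a * b ^ polyDegree ι e)^[n] f.leadingCoeff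
  have natDegree_eq (p : S) : ((poly e (q p)).comp^[n] f).natDegree = D := by
    rw [natDegree_iterate_comp, natDegree_poly]
  have leadingCoeff_eq (p : S) : ((poly e (q p)).comp^[n] f).leadingCoeff = ℓ := by
    rw [leadingCoeff_iterate_comp (by rwa [natDegree_poly]) hf, natDegree_poly, leadingCoeff_poly]
  have ha : a ≠ 0 := by simpa [a] using polyDegree_ne
  have hℓ : ℓ ≠ 0 := Function.Iterate.rec (· ≠ 0) (leadingCoeff_ne_zero.2 fun h => hf (by simp [h]))
    (fun b hb => mul_ne_zero ha (pow_ne_zero _ hb)) n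
  let ρ := (R / ‖ℓ‖) ^ (D : ℝ)⁻¹
  have hρ : ‖ℓ‖ * ρ ^ D = R := by
    rw [Real.rpow_inv_natCast_pow (by positivity) D_ne, mul_div_cancel₀ _ (norm_ne_zero_iff.2 hℓ)]
  obtain ⟨lam, hlam⟩ := exists_isRayLanding hℓ D_ne (by positivity : 0 < ρ) leadingCoeff_eq
    natDegree_eq (fun i => (continuous_coeff_iterate_comp_poly e n f i).comp cont) fun p z hz => by
      obtain ⟨m, hm, j, hj⟩ := exists_critOrbit_eq_of_isRoot_derivative (crit_f p) hz
      rw [hj, hρ]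
      exact norm_le p m hm j
  exact ⟨ℓ, ρ, lam, hℓ, by positivity, hρ, hlam⟩

end Iterate

section Sweep

lemma rootMultiplicity_critPoly_crit {ι K : Type*} [Fintype ι] [Field K]
    {q : Option ι → K} {j₀ : Option ι} (e : ℕ) (isolated : ∀ j ≠ j₀, crit q j ≠ crit q j₀) :
    (critPoly e q).rootMultiplicity (crit q j₀) = (if j₀ = none then e else 0) + 1 := by
  classical
  have rootMultiplicity_pow :
      (X ^ e : K[X]).rootMultiplicity (crit q j₀) = if j₀ = none then e else 0 := by
    split_ifs with h
    · subst h
      simpa [crit] using rootMultiplicity_X_sub_C_pow (0 : K) e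
    · refine rootMultiplicity_eq_zero fun hroot => isolated none (Ne.symm h) ?_
      exact (eq_zero_of_pow_eq_zero (by simpa using hroot)).symm
  have others :
      (∏ j ∈ Finset.univ.erase j₀, (X - C (crit q j))).rootMultiplicity (crit q j₀) = 0 := by
    refine rootMultiplicity_eq_zero ?_
    simp only [IsRoot.def, eval_prod, eval_sub, eval_X, eval_C, Finset.prod_eq_zero_iff,
      sub_eq_zero]
    rintro ⟨j, hj, eq⟩
    exact isolated j (Finset.ne_of_mem_erase hj) eq.symm
  have ne_zero := (monic_critPoly e q).ne_zero
  rw [critPoly, ← Finset.mul_prod_erase _ _ (Finset.mem_univ j₀)] at ne_zero ⊢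
  rw [rootMultiplicity_mul ne_zero, rootMultiplicity_mul (right_ne_zero_of_mul ne_zero),
    rootMultiplicity_pow, rootMultiplicity_X_sub_C_self, others]

variable {ι : Type*} [Fintype ι] {e N : ℕ} {R M : ℝ}

lemma IsEscapeRadius.isLevelPoint_crit (h : IsEscapeRadius ι e R M) (hN : N ≠ 0) {S : Type*}
    [TopologicalSpace S] {q : S → Option ι → ℂ} (cont : Continuous q)
    (norm_le : ∀ p, ‖q p‖ ≤ M) (norm_critOrbit_le : ∀ p, ‖critOrbit e N (q p)‖ ≤ R)
    {j₀ : Option ι} (norm_eq : ∀ p, ‖critOrbit e N (q p) j₀‖ = R)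
    (isolated : ∀ p, ∀ j ≠ j₀, crit (q p) j ≠ crit (q p) j₀) {D : ℕ} {ℓ : ℂ} {ρ : ℝ}
    (hℓ : ‖ℓ‖ * ρ ^ D = R) :
    IsLevelPoint (fun p => (poly e (q p)).comp^[N] X) D ℓ ρ ((if j₀ = none then e else 0) + 2)
      fun p => crit (q p) j₀ := by
  refine ⟨?_, fun p => ?_, fun p => ?_⟩
  · cases j₀
    · exact continuous_const
    · exact (continuous_apply (some _)).comp cont
  · rw [iterate_comp_eval, eval_X, hℓ]
    exact norm_eq p
  · obtain ⟨n, rfl⟩ := Nat.exists_eq_succ_of_ne_zero hN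
    have natDegree_ne : ((poly e (q p)).comp^[n + 1] X).natDegree ≠ 0 := by
      simp [natDegree_iterate_comp, natDegree_poly, polyDegree]
    have not_isRoot (i : ℕ) (hi : i < n) : ¬ (derivative (poly e (q p))).IsRoot
        ((fun z => (poly e (q p)).eval z)^[i] ((poly e (q p)).eval (crit (q p) j₀))) :=
      h.not_isRoot_derivative_critOrbit (norm_le p) (norm_critOrbit_le p) (norm_eq p)
        i.succ_ne_zero (by omega)
    rw [rootMultiplicity_sub_C_eval natDegree_ne, Function.iterate_succ_apply, comp_X,
      rootMultiplicity_derivative_iterate_comp not_isRoot, derivative_poly,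
      rootMultiplicity_critPoly_crit e (isolated p)]

theorem IsEscapeRadius.exists_crit_eq (h : IsEscapeRadius ι e R M) (hN : N ≠ 0) {S : Type*}
    [TopologicalSpace S] [CompactSpace S] [T2Space S] [Nonempty S] {q : S → Option ι → ℂ}
    (cont : Continuous q) (norm_le : ∀ p, ‖q p‖ ≤ M)
    (norm_critOrbit_le : ∀ p, ‖critOrbit e N (q p)‖ ≤ R) {j₁ j₂ : Option ι} {y : ℂ} (hy : ‖y‖ = R)
    (eq_const : ∀ p, critOrbit e N (q p) j₁ = y) (norm_eq : ∀ p, ‖critOrbit e N (q p) j₂‖ = R)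
    (isolated₁ : ∀ p, ∀ j ≠ j₁, crit (q p) j ≠ crit (q p) j₁)
    (isolated₂ : ∀ p, ∀ j ≠ j₂, crit (q p) j ≠ crit (q p) j₂)
    (surj : ∀ p, 𝓝[Metric.sphere 0 R] (critOrbit e N (q p) j₂) ≤
      map (fun p => critOrbit e N (q p) j₂) (𝓝 p)) :
    ∃ p, crit (q p) j₁ = crit (q p) j₂ := by
  have D_ne : polyDegree ι e ^ N * (X : ℂ[X]).natDegree ≠ 0 := by simp [polyDegree]
  obtain ⟨ℓ, ρ, lam, hℓ, ρ_nonneg, hρ, landing⟩ := exists_isRayLanding_iterate_comp_poly cont h.pos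
    (fun p m hm j => h.norm_critOrbit_le (norm_le p)
      ((norm_le_pi_norm _ j).trans (norm_critOrbit_le p)) hm)
    (f := X) (by simp) (fun p z hz => by simp at hz)
  have level₁ := h.isLevelPoint_crit hN cont norm_le norm_critOrbit_le
    (fun p => by rw [eq_const, hy]) isolated₁ hρ
  have level₂ := h.isLevelPoint_crit hN cont norm_le norm_critOrbit_le norm_eq isolated₂ hρ
  obtain ⟨p₀⟩ := ‹Nonempty S›
  obtain ⟨w, hw, landing₁⟩ := level₁.exists_landing_eq landing hℓ D_ne ρ_nonneg
    (Nat.succ_ne_zero _) p₀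
  have eval_eq (p : S) (j : Option ι) :
      ((poly e (q p)).comp^[N] X).eval (crit (q p) j) = critOrbit e N (q p) j := by
    rw [iterate_comp_eval, eval_X, critOrbit]
  have value (p : S) : ((poly e (q p)).comp^[N] X).eval (crit (q p) j₁) =
      ℓ * w ^ (polyDegree ι e ^ N * (X : ℂ[X]).natDegree) := by
    rw [← landing.eval_landing D_ne p₀ hw, landing₁, eval_eq, eval_eq, eq_const, eq_const]
  obtain ⟨p, landing₁, landing₂⟩ := level₂.exists_mem_landing_eq landing hℓ D_ne
    (Nat.succ_ne_zero _) (fun p => by simpa only [hρ, eval_eq] using surj p)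
    (level₁.isClopen_setOf_landing_eq landing hℓ D_ne hw value) ⟨p₀, landing₁⟩ hw
  exact ⟨p, landing₁.symm.trans landing₂⟩

lemma crit_ne_crit_of_critOrbit_eq_zero {q : Option ι → ℂ} {j₁ j₂ : Option ι}
    (ne : crit q j₁ ≠ crit q j₂) (ne_zero : critOrbit e N q j₁ ≠ 0)
    (others : ∀ j, j ≠ j₁ → j ≠ j₂ → critOrbit e N q j = 0) : ∀ j ≠ j₁, crit q j ≠ crit q j₁ := by
  intro j hj eq
  obtain rfl | hj₂ := eq_or_ne j j₂
  · exact ne eq.symm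
  · exact ne_zero (by rw [critOrbit, ← eq, ← critOrbit, others j hj hj₂])

theorem IsEscapeRadius.exists_mem_eq_zero (h : IsEscapeRadius ι e R M) (hN : N ≠ 0)
    {A : Set (critOrbit e N ⁻¹' Metric.ball (0 : Option ι → ℂ) (2 * R))} (hA : IsClopen A)
    (nonempty : A.Nonempty) (i₀ : ι) : ∃ q ∈ A, q.1 (some i₀) = 0 := by
  classical
  have R_pos := h.pos
  have norm_R : ‖(R : ℂ)‖ = R := by simpa using R_pos.le
  let y : Option ι → ℂ := Function.update 0 none R
  have hy : ‖y‖ ≤ R := norm_update_le (by simpa using R_pos.le) norm_R.le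
  let S := circleSlice (critOrbit e N) A y (some i₀) R
  let q (p : S) : Option ι → ℂ := p.1
  have proper := isProperMap_critOrbit (ι := ι) e hN
  have isOpenMap := isOpenMap_critOrbit (ι := ι) e hN
  have : CompactSpace S := isCompact_iff_compactSpace.1
    (isCompact_circleSlice proper hA hy (by linarith))
  have : Nonempty S :=
    (nonempty_circleSlice proper isOpenMap hA nonempty hy (by linarith)).to_subtype
  have critOrbit_none (p : S) : critOrbit e N (q p) none = R := by
    simpa [y] using apply_eq_of_mem_circleSlice p (Option.some_ne_none i₀).symm
  have norm_critOrbit_some (p : S) : ‖critOrbit e N (q p) (some i₀)‖ = R :=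
    norm_apply_eq_of_mem_circleSlice p
  have critOrbit_other (p : S) (j : Option ι) (h_none : j ≠ none) (h_some : j ≠ some i₀) :
      critOrbit e N (q p) j = 0 := by
    simpa [y, h_none] using apply_eq_of_mem_circleSlice p h_some
  by_contra! ne_zero
  have isolated_none (p : S) : ∀ j ≠ none, crit (q p) j ≠ crit (q p) none :=
    crit_ne_crit_of_critOrbit_eq_zero (j₂ := some i₀) (ne_zero p.1 p.2.1).symm
      (norm_pos_iff.1 (by rwa [critOrbit_none, norm_R])) (critOrbit_other p)
  have isolated_some (p : S) : ∀ j ≠ some i₀, crit (q p) j ≠ crit (q p) (some i₀) :=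
    crit_ne_crit_of_critOrbit_eq_zero (j₂ := none) (ne_zero p.1 p.2.1)
      (norm_pos_iff.1 (by rwa [norm_critOrbit_some])) fun j h_some h_none =>
        critOrbit_other p j h_none h_some
  obtain ⟨p, hp⟩ := h.exists_crit_eq hN (q := q) (by fun_prop) (fun p => h.norm_le hN p.1.2)
    (norm_le_of_mem_circleSlice hy) norm_R critOrbit_none norm_critOrbit_some isolated_none
    isolated_some
    (nhdsWithin_sphere_le_map_circleSlice (continuous_critOrbit e N) isOpenMap hA.isOpen)
  exact ne_zero p.1 p.2.1 hp.symm

end Sweep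

section Count

lemma IsLevelPoint.exists_finset_eval_eq {S : Type*} [TopologicalSpace S] [CompactSpace S]
    [Nonempty S] {Q : S → ℂ[X]} {D : ℕ} {ℓ : ℂ} {ρ : ℝ} {lam : S × ℂ → ℂ} {c : S → ℂ}
    (hc : IsLevelPoint Q D ℓ ρ 1 c) (h : IsRayLanding Q D ℓ ρ lam) (hℓ : ℓ ≠ 0) (hD : D ≠ 0)
    (hρ : 0 ≤ ρ)
    (surj : ∀ p, 𝓝[Metric.sphere 0 (‖ℓ‖ * ρ ^ D)] ((Q p).eval (c p)) ≤
      map (fun p => (Q p).eval (c p)) (𝓝 p))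
    {v : ℂ} (hv : ‖v‖ = ‖ℓ‖ * ρ ^ D) :
    ∃ s : Finset S, s.card = D ∧ ∀ p ∈ s, (Q p).eval (c p) = v := by
  classical
  obtain ⟨w, hw⟩ := IsAlgClosed.exists_pow_nat_eq (ℓ⁻¹ * v) (Nat.pos_of_ne_zero hD)
  replace hw : ℓ * w ^ D = v := by rw [hw, mul_inv_cancel_left₀ hℓ]
  have norm_w : ‖w‖ = ρ := by
    rw [← hw, norm_mul, norm_pow, mul_right_inj' (norm_ne_zero_iff.2 hℓ)] at hv
    exact (pow_left_inj₀ (norm_nonneg w) hρ hD).1 hv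
  have exists_landing (η : ℂ) (hη : η ∈ nthRootsFinset D (1 : ℂ)) : ∃ p, lam (p, η * w) = c p := by
    obtain ⟨p, -, landing⟩ := hc.exists_mem_landing_eq h hℓ hD one_ne_zero surj isClopen_univ
      Set.univ_nonempty ((norm_mul_of_mem_nthRootsFinset_one hη w).trans norm_w)
    exact ⟨p, landing⟩
  choose! p landing using exists_landing
  have value (η : ℂ) (hη : η ∈ nthRootsFinset D (1 : ℂ)) : (Q (p η)).eval (c (p η)) = v := by
    rw [← landing η hη,
      h.eval_landing hD _ ((norm_mul_of_mem_nthRootsFinset_one hη w).trans norm_w),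
      mul_pow, (mem_nthRootsFinset (Nat.pos_of_ne_zero hD) 1).1 hη, one_mul, hw]
  refine ⟨(nthRootsFinset D 1).image p, ?_, Finset.forall_mem_image.2 value⟩
  rw [Finset.card_image_of_injOn,
    (Complex.isPrimitiveRoot_exp D hD).card_nthRootsFinset]
  intro η hη η' hη' eq
  refine Finset.card_le_one.1 (hc.card_filter_eq h hℓ hD hρ (hw.trans (value η hη).symm)).le
    _ (Finset.mem_filter.2 ⟨hη, landing η hη⟩) _ (Finset.mem_filter.2 ⟨hη', ?_⟩)
  rw [eq]
  exact landing η' hη'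

end Count

section Unicritical

variable {ι A : Type*} [Fintype ι] [CommRing A] [Algebra ℚ A]

lemma critOrbit_none_of_eq_zero (e N : ℕ) {q : Option ι → A} (hq : q none = 0) :
    critOrbit e N q none = 0 := by
  have fixed : Function.IsFixedPt (fun z => (poly e q).eval z) 0 := by
    rw [Function.IsFixedPt, eval_zero_poly, hq, zero_pow (polyDegree_ne_zero ι e)]
  exact fixed.iterate N

lemma critOrbit_succ_none (e n : ℕ) (q : Option ι → A) :
    critOrbit e (n + 1) q none = ((poly e q).comp^[n] (X ^ polyDegree ι e)).eval (q none) := by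
  rw [critOrbit, Function.iterate_succ_apply, iterate_comp_eval, eval_X_pow]
  exact congr_arg _ (eval_zero_poly e q)

variable [IsEmpty ι]

lemma eval_poly_of_isEmpty (e : ℕ) (q : Option ι → A) (z : A) : (poly e q).eval z =
    algebraMap ℚ A (polyDegree ι e : ℚ)⁻¹ * z ^ polyDegree ι e + q none ^ polyDegree ι e := by
  have critPoly_eq : critPoly e q = critPoly e (0 : Option ι → A) := by
    simp [critPoly, crit, Unique.default_eq none]
  rw [← eval_poly_zero (ι := ι), poly, poly, critPoly_eq, eval_add, eval_add, eval_C, Pi.zero_apply,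
    zero_pow (polyDegree_ne_zero ι e), C_0, eval_zero, add_zero]

lemma natDegree_critOrbit_X_le {K : Type*} [Field K] [Algebra ℚ K] (e N : ℕ) :
    (critOrbit e N (fun _ : Option ι => (X : K[X])) none).natDegree ≤ polyDegree ι e ^ N := by
  induction N with
  | zero => simp [critOrbit, crit]
  | succ N ih =>
    rw [critOrbit, Function.iterate_succ_apply', ← critOrbit, eval_poly_of_isEmpty]
    refine natDegree_add_le_of_degree_le ?_ ?_
    · rw [IsScalarTower.algebraMap_apply ℚ K K[X], algebraMap_eq]
      refine (natDegree_C_mul_le _ _).trans (natDegree_pow_le.trans ?_)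
      rw [pow_succ']
      gcongr
    · rw [natDegree_X_pow]
      exact Nat.le_self_pow N.succ_ne_zero _

lemma card_le_of_critOrbit_none_eq {K : Type*} [Field K] [Algebra ℚ K] (e N : ℕ) {v : K}
    (hv : v ≠ 0) {s : Finset (Option ι → K)} (hs : ∀ q ∈ s, critOrbit e N q none = v) :
    s.card ≤ polyDegree ι e ^ N := by
  classical
  let f : K[X] := critOrbit e N (fun _ : Option ι => X) none - C v
  have eval_f (q : Option ι → K) : f.eval (q none) = critOrbit e N q none - v := by
    have eval_X : evalRingHom (q none) ∘ (fun _ : Option ι => X) = q := by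
      funext j
      simp [Subsingleton.elim j none]
    rw [← eval_X, critOrbit_comp]
    simp [f]
  have f_ne : f ≠ 0 := fun h => hv <| by
    simpa [h, critOrbit_none_of_eq_zero] using eval_f 0
  calc s.card ≤ f.roots.toFinset.card := by
        refine Finset.card_le_card_of_injOn (· none) (fun q hq => ?_) fun q _ q' _ eq => ?_
        · simp [f_ne, eval_f, hs q hq]
        · funext j
          rwa [Subsingleton.elim j none]
    _ ≤ f.natDegree := (Multiset.toFinset_card_le _).trans (card_roots' f)
    _ ≤ polyDegree ι e ^ N := by
        rw [natDegree_sub_C]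
        exact natDegree_critOrbit_X_le e N

end Unicritical

section Base

variable {ι : Type*} [Fintype ι] [IsEmpty ι] {e n : ℕ} {R M : ℝ}

lemma IsEscapeRadius.isLevelPoint_none (h : IsEscapeRadius ι e R M) {S : Type*}
    [TopologicalSpace S] {q : S → Option ι → ℂ} (cont : Continuous q) (norm_le : ∀ p, ‖q p‖ ≤ M)
    (norm_eq : ∀ p, ‖critOrbit e (n + 1) (q p) none‖ = R) {D : ℕ} {ℓ : ℂ} {ρ : ℝ}
    (hℓ : ‖ℓ‖ * ρ ^ D = R) :
    IsLevelPoint (fun p => (poly e (q p)).comp^[n] (X ^ polyDegree ι e)) D ℓ ρ 1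
      fun p => q p none := by
  refine ⟨(continuous_apply none).comp cont, fun p => ?_, fun p => ?_⟩
  · rw [← critOrbit_succ_none, norm_eq, hℓ]
  have param_ne : q p none ≠ 0 := fun eq => h.pos.ne <| by
    rw [← norm_eq p, critOrbit_none_of_eq_zero e (n + 1) eq, norm_zero]
  have norm_critOrbit_le : ‖critOrbit e (n + 1) (q p)‖ ≤ R :=
    (pi_norm_le_iff_of_nonneg h.pos.le).2 fun j => Subsingleton.elim none j ▸ (norm_eq p).le
  have not_isRoot : ¬ (derivative ((poly e (q p)).comp^[n] (X ^ polyDegree ι e))).IsRoot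
      (q p none) := by
    rw [isRoot_derivative_iterate_comp, not_or]
    refine ⟨by simp [derivative_X_pow, param_ne, polyDegree_ne_zero], fun ⟨i, hi, hroot⟩ => ?_⟩
    refine h.not_isRoot_derivative_critOrbit (norm_le p) norm_critOrbit_le (norm_eq p)
      i.succ_ne_zero (by omega) ?_
    rwa [critOrbit_succ_none, iterate_comp_eval]
  have natDegree_ne : ((poly e (q p)).comp^[n] (X ^ polyDegree ι e)).natDegree ≠ 0 := by
    simp [natDegree_iterate_comp, natDegree_poly, polyDegree]
  rw [rootMultiplicity_sub_C_eval natDegree_ne, rootMultiplicity_eq_zero not_isRoot]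

lemma IsEscapeRadius.exists_finset_critOrbit_eq (h : IsEscapeRadius ι e R M)
    {A : Set (critOrbit e (n + 1) ⁻¹' Metric.ball (0 : Option ι → ℂ) (2 * R))} (hA : IsClopen A)
    (nonempty : A.Nonempty) : ∃ s : Finset (Option ι → ℂ), s.card = polyDegree ι e ^ (n + 1) ∧
      ∀ q ∈ s, q ∈ Subtype.val '' A ∧ critOrbit e (n + 1) q none = R := by
  have R_pos := h.pos
  have h0 : ‖(0 : Option ι → ℂ)‖ ≤ R := by simpa using R_pos.le
  let S := circleSlice (critOrbit e (n + 1)) A 0 none R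
  let q (p : S) : Option ι → ℂ := p.1
  have proper := isProperMap_critOrbit (ι := ι) e n.succ_ne_zero
  have isOpenMap := isOpenMap_critOrbit (ι := ι) e n.succ_ne_zero
  have : CompactSpace S := isCompact_iff_compactSpace.1
    (isCompact_circleSlice proper hA h0 (by linarith))
  have : Nonempty S :=
    (nonempty_circleSlice proper isOpenMap hA nonempty h0 (by linarith)).to_subtype
  have norm_le (p : S) : ‖q p‖ ≤ M := h.norm_le n.succ_ne_zero p.1.2
  have natDegree_ne : (X ^ polyDegree ι e : ℂ[X]).natDegree ≠ 0 := by simp [polyDegree]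
  have norm_critOrbit_le (p : S) (m : ℕ) (hm : m ≤ n) (j : Option ι) :
      ‖critOrbit e m (q p) j‖ ≤ R :=
    h.norm_critOrbit_le (norm_le p) ((norm_le_pi_norm _ j).trans (norm_le_of_mem_circleSlice h0 p))
      (hm.trans n.le_succ)
  obtain ⟨ℓ, ρ, lam, hℓ, ρ_nonneg, hρ, landing⟩ := exists_isRayLanding_iterate_comp_poly
    (by fun_prop : Continuous q) R_pos norm_critOrbit_le natDegree_ne fun p z hz => ⟨none, by
      have : z = 0 := by
        rw [IsRoot.def, derivative_X_pow] at hz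
        simp_all [polyDegree_ne_zero]
      simp [this, crit, polyDegree_ne_zero]⟩
  rw [natDegree_X_pow, ← pow_succ] at hρ landing
  have level := h.isLevelPoint_none (by fun_prop) norm_le norm_apply_eq_of_mem_circleSlice hρ
  obtain ⟨s, hs, value⟩ := level.exists_finset_eval_eq landing hℓ
    (pow_ne_zero _ (polyDegree_ne_zero ι e)) ρ_nonneg
    (fun p => by
      simpa only [hρ, ← critOrbit_succ_none] using nhdsWithin_sphere_le_map_circleSlice
        (continuous_critOrbit e (n + 1)) isOpenMap hA.isOpen p)
    (v := R) (by simpa [hρ] using R_pos.le)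
  refine ⟨s.map ⟨q, Subtype.val_injective.comp Subtype.val_injective⟩, by rw [Finset.card_map, hs],
    fun _ hq => ?_⟩
  obtain ⟨p, hp, rfl⟩ := Finset.mem_map.1 hq
  exact ⟨⟨p.1, p.2.1, rfl⟩, (critOrbit_succ_none e n (q p)).trans (value p hp)⟩

theorem IsEscapeRadius.preconnectedSpace_of_isEmpty (h : IsEscapeRadius ι e R M) (n : ℕ) :
    PreconnectedSpace (critOrbit e (n + 1) ⁻¹' Metric.ball (0 : Option ι → ℂ) (2 * R)) := by
  classical
  refine preconnectedSpace_iff_clopen.2 fun A hA => ?_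
  by_contra! ⟨nonempty, ne_univ⟩
  obtain ⟨s, hs, value_s⟩ := h.exists_finset_critOrbit_eq hA nonempty
  obtain ⟨t, ht, value_t⟩ := h.exists_finset_critOrbit_eq hA.compl (Set.nonempty_compl.2 ne_univ)
  have disjoint : Disjoint s t := Finset.disjoint_left.2 fun q hqs hqt =>
    Set.disjoint_left.1 ((Set.disjoint_image_iff Subtype.val_injective).2 disjoint_compl_right)
      (value_s q hqs).1 (value_t q hqt).1
  have card_le := card_le_of_critOrbit_none_eq e (n + 1) (v := (R : ℂ))
    (by exact_mod_cast h.pos.ne') (s := s ∪ t)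
    fun q hq => (Finset.mem_union.1 hq).elim (fun hq => (value_s q hq).2) fun hq => (value_t q hq).2
  rw [Finset.card_union_of_disjoint disjoint, hs, ht] at card_le
  have : 0 < polyDegree ι e ^ (n + 1) := by simp [polyDegree]
  omega

end Base

section Merge

variable {ι κ A : Type*} [CommRing A]

/-- The parameter with the same polynomial as `q`, in which the critical point with index
`ψ.symm none` has been merged with the origin. -/
def merge (ψ : κ ≃ Option ι) (q : Option ι → A) (j : Option κ) : A :=
  j.elim (q none) fun i => crit q (ψ i)

lemma crit_merge (ψ : κ ≃ Option ι) (q : Option ι → A) (j : Option κ) :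
    crit (merge ψ q) j = crit q (j.bind ψ) := by
  cases j <;> rfl

lemma surjective_option_bind (ψ : κ ≃ Option ι) :
    Function.Surjective fun j : Option κ => j.bind ψ :=
  fun j => ⟨some (ψ.symm j), ψ.apply_symm_apply j⟩

lemma exists_merge_eq (ψ : κ ≃ Option ι) {q : Option κ → A} (hq : q (some (ψ.symm none)) = 0) :
    ∃ q', merge ψ q' = q := by
  refine ⟨fun j => j.elim (q none) fun i => q (some (ψ.symm (some i))), funext fun j => ?_⟩
  cases j with
  | none => rfl
  | some k =>
    obtain ⟨j, rfl⟩ := ψ.symm.surjective k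
    cases j <;> simp [merge, crit, hq]

section Norm

variable [Fintype ι] [Fintype κ]

lemma norm_merge (ψ : κ ≃ Option ι) (q : Option ι → ℂ) : ‖merge ψ q‖ = ‖q‖ := by
  refine le_antisymm ((pi_norm_le_iff_of_nonneg (norm_nonneg q)).2 fun j => ?_)
    ((pi_norm_le_iff_of_nonneg (norm_nonneg _)).2 fun j => ?_)
  · cases j with
    | none => exact norm_le_pi_norm q none
    | some k =>
      rw [merge, Option.elim_some]
      cases ψ k with
      | none => simp [crit]
      | some i => exact norm_le_pi_norm q (some i)
  · cases j with
    | none => exact norm_le_pi_norm (merge ψ q) none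
    | some i => simpa [merge, crit] using norm_le_pi_norm (merge ψ q) (some (ψ.symm (some i)))

end Norm

lemma continuous_merge (ψ : κ ≃ Option ι) :
    Continuous (merge ψ : (Option ι → ℂ) → Option κ → ℂ) := by
  refine continuous_pi fun j => ?_
  cases j with
  | none => exact continuous_apply none
  | some k =>
    simp only [merge, Option.elim_some]
    cases ψ k with
    | none => exact continuous_const
    | some i => exact continuous_apply (some i)

variable [Fintype ι] [Fintype κ]

lemma critPoly_merge (ψ : κ ≃ Option ι) (e : ℕ) (q : Option ι → A) :
    critPoly e (merge ψ q) = critPoly (e + 1) q := by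
  simp only [critPoly, crit_merge,
    Fintype.prod_option (fun j : Option κ => X - C (crit q (j.bind ψ))),
    Option.bind_none, Option.bind_some, ψ.prod_comp fun j => X - C (crit q j)]
  simp [crit, pow_succ, mul_assoc]

lemma polyDegree_of_equiv_option (ψ : κ ≃ Option ι) (e : ℕ) :
    polyDegree κ e = polyDegree ι (e + 1) := by
  rw [polyDegree, polyDegree, Fintype.card_congr ψ, Fintype.card_option]
  ring

variable [Algebra ℚ A]

lemma poly_merge (ψ : κ ≃ Option ι) (e : ℕ) (q : Option ι → A) :
    poly e (merge ψ q) = poly (e + 1) q := by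
  rw [poly, poly, critPoly_merge, polyDegree_of_equiv_option ψ]
  rfl

lemma critOrbit_merge (ψ : κ ≃ Option ι) (e N : ℕ) (q : Option ι → A) (j : Option κ) :
    critOrbit e N (merge ψ q) j = critOrbit (e + 1) N q (j.bind ψ) := by
  rw [critOrbit, critOrbit, poly_merge, crit_merge]

lemma norm_critOrbit_merge_lt_iff (ψ : κ ≃ Option ι) (e N : ℕ) (q : Option ι → ℂ) {r : ℝ}
    (hr : 0 < r) : ‖critOrbit e N (merge ψ q)‖ < r ↔ ‖critOrbit (e + 1) N q‖ < r := by
  simp only [pi_norm_lt_iff hr, critOrbit_merge]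
  exact (surjective_option_bind ψ).forall (p := fun j => ‖critOrbit (e + 1) N q j‖ < r) |>.symm

lemma IsEscapeRadius.of_equiv_option (ψ : κ ≃ Option ι) {e : ℕ} {R M : ℝ}
    (h : IsEscapeRadius κ e R M) : IsEscapeRadius ι (e + 1) R M where
  pos := h.pos
  two_mul_norm_le {q z} hq hz := by
    rw [← poly_merge ψ]
    exact h.two_mul_norm_le (by rwa [norm_merge]) hz
  exists_le_norm {q} hq := by
    obtain ⟨j, hj⟩ := h.exists_le_norm (q := merge ψ q) (by rwa [norm_merge])
    exact ⟨j.bind ψ, fun n => by simpa only [critOrbit_merge] using hj n⟩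

end Merge

section Connected

lemma preconnectedSpace_of_isClopen_preimage_nonempty {X Y : Type*} [TopologicalSpace X]
    [TopologicalSpace Y] [PreconnectedSpace X] {f : X → Y} (hf : Continuous f)
    (h : ∀ A : Set Y, IsClopen A → A.Nonempty → (f ⁻¹' A).Nonempty) : PreconnectedSpace Y := by
  refine preconnectedSpace_iff_clopen.2 fun A hA => ?_
  by_contra! ⟨nonempty, ne_univ⟩
  obtain empty | univ := isClopen_iff.1 (hA.preimage hf)
  · exact (h A hA nonempty).ne_empty empty
  · have := h Aᶜ hA.compl (Set.nonempty_compl.2 ne_univ)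
    rw [Set.preimage_compl, univ, Set.compl_univ] at this
    exact Set.not_nonempty_empty this

theorem IsEscapeRadius.preconnectedSpace {ι : Type*} [Fintype ι] {e : ℕ} {R M : ℝ}
    (h : IsEscapeRadius ι e R M) (n : ℕ) :
    PreconnectedSpace (critOrbit e (n + 1) ⁻¹' Metric.ball (0 : Option ι → ℂ) (2 * R)) := by
  classical
  induction hk : Fintype.card ι generalizing ι e with
  | zero =>
    have := Fintype.card_eq_zero_iff.1 hk
    exact h.preconnectedSpace_of_isEmpty n
  | succ k ih =>
    obtain ⟨i₀⟩ : Nonempty ι := Fintype.card_pos_iff.1 (by omega)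
    let ψ : ι ≃ Option {i // i ≠ i₀} := (Equiv.optionSubtypeNe i₀).symm
    have mem_iff (q : Option {i // i ≠ i₀} → ℂ) : merge ψ q ∈ critOrbit e (n + 1) ⁻¹'
        Metric.ball 0 (2 * R) ↔ q ∈ critOrbit (e + 1) (n + 1) ⁻¹' Metric.ball 0 (2 * R) := by
      simp only [Set.mem_preimage, mem_ball_zero_iff,
        norm_critOrbit_merge_lt_iff ψ _ _ q (mul_pos two_pos h.pos)]
    have := ih (h.of_equiv_option ψ) (by simp [hk])
    have mapsTo : Set.MapsTo (merge ψ) (critOrbit (e + 1) (n + 1) ⁻¹' Metric.ball 0 (2 * R))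
        (critOrbit e (n + 1) ⁻¹' Metric.ball 0 (2 * R)) := fun q => (mem_iff q).2
    refine preconnectedSpace_of_isClopen_preimage_nonempty
      ((continuous_merge ψ).restrict mapsTo) fun A hA nonempty => ?_
    obtain ⟨⟨q, hq⟩, hqA, hq₀⟩ := h.exists_mem_eq_zero n.succ_ne_zero hA nonempty i₀
    obtain ⟨q', rfl⟩ := exists_merge_eq ψ hq₀
    exact ⟨⟨q', (mem_iff q').1 hq⟩, hqA⟩

end Connected

section NestedIntersection

variable {X κ : Type*} [TopologicalSpace X] [T2Space X] [Nonempty κ] {K : κ → Set X}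

lemma isCompact_iInter (compact : ∀ i, IsCompact (K i)) : IsCompact (⋂ i, K i) :=
  ‹Nonempty κ›.elim fun i => (compact i).of_isClosed_subset
    (isClosed_iInter fun i => (compact i).isClosed) (Set.iInter_subset K i)

lemma isPreconnected_iInter_of_directed (directed : Directed (· ⊇ ·) K)
    (compact : ∀ i, IsCompact (K i))
    (interpolate : ∀ i, ∃ P, IsPreconnected P ∧ ⋂ j, K j ⊆ P ∧ P ⊆ K i) :
    IsPreconnected (⋂ i, K i) := by
  refine (isPreconnected_iff_subset_of_disjoint_closed).2 fun s t hs ht cover disjoint => ?_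
  obtain ⟨U, V, hU, hV, sU, tV, UV⟩ : SeparatedNhds ((⋂ i, K i) ∩ s) ((⋂ i, K i) ∩ t) :=
    SeparatedNhds.of_isCompact_isCompact ((isCompact_iInter compact).inter_right hs)
      ((isCompact_iInter compact).inter_right ht)
      (Set.disjoint_iff_inter_eq_empty.2 (by rw [← Set.inter_inter_distrib_left, disjoint]))
  have subset_union : ⋂ i, K i ⊆ U ∪ V := fun x hx =>
    (cover hx).imp (fun hs => sU ⟨hx, hs⟩) fun ht => tV ⟨hx, ht⟩
  obtain ⟨i, hi⟩ := exists_subset_nhds_of_isCompact directed compact fun x hx =>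
    (hU.union hV).mem_nhds (subset_union hx)
  obtain ⟨P, hP, le_P, P_le⟩ := interpolate i
  refine (hP.subset_or_subset hU hV UV (P_le.trans hi)).imp (fun PU x hx => ?_) fun PV x hx => ?_
  · exact (cover hx).resolve_right fun ht => Set.disjoint_left.1 UV (PU (le_P hx)) (tV ⟨hx, ht⟩)
  · exact (cover hx).resolve_left fun hs => Set.disjoint_left.1 UV (sU ⟨hx, hs⟩) (PV (le_P hx))

end NestedIntersection

section Locus

/-- The parameters all of whose critical orbits are bounded. -/
def boundednessLocus (ι : Type*) [Fintype ι] (e : ℕ) : Set (Option ι → ℂ) :=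
  {q | ∀ j, Bornology.IsBounded (Set.range fun n => critOrbit e n q j)}

variable {ι : Type*} [Fintype ι] {e : ℕ} {R M : ℝ} {q : Option ι → ℂ}

lemma zero_mem_boundednessLocus : 0 ∈ boundednessLocus ι e := fun j => by
  have orbit_eq (n : ℕ) : critOrbit e n (0 : Option ι → ℂ) j = 0 := by
    rw [← critOrbit_none_of_eq_zero e n (q := (0 : Option ι → ℂ)) rfl]
    cases j <;> rfl
  simp [orbit_eq]

lemma IsEscapeRadius.norm_le_of_mem_boundednessLocus (h : IsEscapeRadius ι e R M)
    (hq : q ∈ boundednessLocus ι e) : ‖q‖ ≤ M := by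
  by_contra! lt_norm
  obtain ⟨j, hj⟩ := h.exists_le_norm lt_norm
  obtain ⟨B, hB⟩ := (hq j).exists_norm_le
  obtain ⟨n, hn⟩ := pow_unbounded_of_one_lt (B / R) one_lt_two
  rw [div_lt_iff₀ h.pos] at hn
  have : B < 2 ^ (n + 1) * R := by rw [pow_succ]; nlinarith [h.pos, pow_pos (two_pos (α := ℝ)) n]
  exact (this.trans_le (hj n)).not_ge (hB _ ⟨n + 1, rfl⟩)

lemma IsEscapeRadius.norm_critOrbit_le_of_mem_boundednessLocus (h : IsEscapeRadius ι e R M)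
    (hq : q ∈ boundednessLocus ι e) (N : ℕ) : ‖critOrbit e N q‖ ≤ R := by
  refine (pi_norm_le_iff_of_nonneg h.pos.le).2 fun j => ?_
  by_contra! lt_norm
  have norm_pos : 0 < ‖critOrbit e N q j‖ := h.pos.trans lt_norm
  obtain ⟨B, hB⟩ := (hq j).exists_norm_le
  obtain ⟨n, hn⟩ := pow_unbounded_of_one_lt (B / ‖critOrbit e N q j‖) one_lt_two
  rw [div_lt_iff₀ norm_pos] at hn
  have le_iterate := h.two_pow_mul_norm_le_norm_iterate (h.norm_le_of_mem_boundednessLocus hq)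
    lt_norm.le n
  rw [← critOrbit_add] at le_iterate
  exact (hn.trans_le le_iterate).not_ge (hB _ ⟨n + N, rfl⟩)

lemma IsEscapeRadius.boundednessLocus_eq_iInter (h : IsEscapeRadius ι e R M) :
    boundednessLocus ι e = ⋂ n : ℕ, critOrbit e (n + 1) ⁻¹' Metric.closedBall 0 R := by
  refine Set.Subset.antisymm (fun q hq => Set.mem_iInter.2 fun n => mem_closedBall_zero_iff.2
    (h.norm_critOrbit_le_of_mem_boundednessLocus hq (n + 1))) fun q hq j => ?_
  have norm_critOrbit_succ_le (n : ℕ) : ‖critOrbit e (n + 1) q‖ ≤ R :=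
    mem_closedBall_zero_iff.1 (Set.mem_iInter.1 hq n)
  have norm_le : ‖q‖ ≤ M := h.norm_le one_ne_zero
    (mem_ball_zero_iff.2 ((norm_critOrbit_succ_le 0).trans_lt (by linarith [h.pos])))
  refine isBounded_iff_forall_norm_le.2 ⟨R, Set.forall_mem_range.2 fun n => ?_⟩
  exact h.norm_critOrbit_le norm_le
    ((norm_le_pi_norm _ j).trans (norm_critOrbit_succ_le n)) n.le_succ

lemma IsEscapeRadius.antitone_preimage_closedBall (h : IsEscapeRadius ι e R M) :
    Antitone fun n : ℕ => critOrbit e (n + 1) ⁻¹' Metric.closedBall (0 : Option ι → ℂ) R :=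
  fun m n hmn q hq => by
    rw [Set.mem_preimage, mem_closedBall_zero_iff] at hq ⊢
    have norm_le : ‖q‖ ≤ M := h.norm_le n.succ_ne_zero
      (mem_ball_zero_iff.2 (hq.trans_lt (by linarith [h.pos])))
    exact (pi_norm_le_iff_of_nonneg h.pos.le).2 fun j =>
      h.norm_critOrbit_le norm_le ((norm_le_pi_norm _ j).trans hq) (Nat.succ_le_succ hmn)

lemma IsEscapeRadius.preimage_ball_subset (h : IsEscapeRadius ι e R M) (n : ℕ) :
    critOrbit e (n + 2) ⁻¹' Metric.ball (0 : Option ι → ℂ) (2 * R) ⊆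
      critOrbit e (n + 1) ⁻¹' Metric.closedBall 0 R := fun q hq => by
  have norm_le : ‖q‖ ≤ M := h.norm_le (n + 1).succ_ne_zero hq
  rw [Set.mem_preimage, mem_closedBall_zero_iff]
  refine (pi_norm_le_iff_of_nonneg h.pos.le).2 fun j => ?_
  by_contra! lt_norm
  have := h.two_mul_norm_le norm_le lt_norm.le
  rw [← critOrbit_succ] at this
  linarith [(norm_le_pi_norm _ j).trans_lt (mem_ball_zero_iff.1 hq)]

theorem isCompact_boundednessLocus (ι : Type*) [Fintype ι] (e : ℕ) :
    IsCompact (boundednessLocus ι e) := by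
  obtain ⟨R, M, h⟩ := exists_isEscapeRadius ι e
  rw [h.boundednessLocus_eq_iInter]
  exact isCompact_iInter fun n => (isProperMap_critOrbit e n.succ_ne_zero).isCompact_preimage
    (isCompact_closedBall 0 R)

theorem isConnected_boundednessLocus (ι : Type*) [Fintype ι] (e : ℕ) :
    IsConnected (boundednessLocus ι e) := by
  refine ⟨⟨0, zero_mem_boundednessLocus⟩, ?_⟩
  obtain ⟨R, M, h⟩ := exists_isEscapeRadius ι e
  rw [h.boundednessLocus_eq_iInter]
  refine isPreconnected_iInter_of_directed h.antitone_preimage_closedBall.directed_ge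
    (fun n => (isProperMap_critOrbit e n.succ_ne_zero).isCompact_preimage
      (isCompact_closedBall 0 R)) fun n => ?_
  refine ⟨_, isPreconnected_iff_preconnectedSpace.2 (h.preconnectedSpace (n + 1)), ?_,
    h.preimage_ball_subset n⟩
  refine (Set.iInter_subset _ (n + 1)).trans (Set.preimage_mono ?_)
  exact Metric.closedBall_subset_ball (by linarith [h.pos])

end Locus

section Translation

lemma coeff_critPoly_zero {n : ℕ} (q : Option (Fin n) → ℂ) (m : ℕ) (hm : m ≤ n) :
    (critPoly 0 q).coeff (m + 1) = (-1) ^ (n - m) * sigmaE (q ∘ some) (n - m) := by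
  have prod_eq : ∏ i, (X - C (q (some i))) =
      ((Finset.univ.val.map (q ∘ some)).map fun z => X - C z).prod := by
    rw [Multiset.map_map]; rfl
  have card_eq : (Finset.univ.val.map (q ∘ some)).card = n := by simp
  rw [critPoly, pow_zero, one_mul, Fintype.prod_option]
  simp only [crit, Option.elim_none, Option.elim_some, C_0, sub_zero, coeff_X_mul]
  rw [prod_eq, Multiset.prod_X_sub_C_coeff _ (hm.trans card_eq.ge), card_eq, sigmaE]

lemma coeff_poly_zero_add_two {n : ℕ} (q : Option (Fin n) → ℂ) (m : ℕ) (hm : m ≤ n) :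
    (poly 0 q).coeff (m + 2) =
      (-1) ^ (n - m) * sigmaE (q ∘ some) (n - m) / ((m + 2 : ℕ) : ℂ) := by
  rw [poly, coeff_add, coeff_antiderivative_succ, coeff_critPoly_zero q m hm, coeff_C_succ,
    add_zero, Rat.smul_def, div_eq_inv_mul]
  push_cast
  ring

lemma coeff_poly_zero_one {n : ℕ} (q : Option (Fin n) → ℂ) : (poly 0 q).coeff 1 = 0 := by
  have isRoot : (critPoly 0 q).IsRoot 0 := isRoot_critPoly.2 ⟨none, rfl⟩
  rw [poly, coeff_add, coeff_antiderivative_succ, coeff_C_succ, coeff_zero_eq_eval_zero, isRoot,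
    smul_zero, add_zero]

lemma Pca_eq_eval_poly {d : ℕ} (hd : 2 ≤ d) (q : Option (Fin (d - 2)) → ℂ) :
    Pca d (q ∘ some) (q none) = fun z => (poly 0 q).eval z := by
  obtain ⟨n, rfl⟩ := Nat.exists_eq_add_of_le' hd
  have degree_eq : polyDegree (Fin (n + 2 - 2)) 0 = n + 2 := by simp [polyDegree]
  have coeff_zero : (poly 0 q).coeff 0 = q none ^ (n + 2) := by
    rw [coeff_zero_eq_eval_zero, eval_zero_poly, degree_eq]
  have Icc_eq : Finset.Icc 2 (n + 2 - 1) = Finset.Ico (0 + 2) (n + 2) := by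
    ext j
    simp only [Finset.mem_Icc, Finset.mem_Ico]
    omega
  funext z
  rw [eval_eq_sum_range, natDegree_poly, degree_eq, Finset.sum_range_succ', Finset.sum_range_succ',
    Finset.sum_range_succ, coeff_zero, coeff_poly_zero_one, coeff_poly_zero_add_two q n le_rfl, Pca,
    Icc_eq, ← Finset.sum_Ico_add', Nat.Ico_zero_eq_range]
  have sum_eq : ∑ m ∈ Finset.range n, (-1 : ℂ) ^ (n + 2 - (m + 2)) *
        sigmaE (q ∘ some) (n + 2 - (m + 2)) * z ^ (m + 2) / ((m + 2 : ℕ) : ℂ) =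
      ∑ m ∈ Finset.range n, (poly 0 q).coeff (m + 1 + 1) * z ^ (m + 1 + 1) := by
    refine Finset.sum_congr rfl fun m hm => ?_
    rw [coeff_poly_zero_add_two q m (Finset.mem_range.1 hm).le, Nat.sub_sub, add_comm 2 m]
    ring
  rw [sum_eq]
  simp [sigmaE, Multiset.esymm]
  ring

lemma boundedOrbit_crit_iff {d : ℕ} (hd : 2 ≤ d) {q : Option (Fin (d - 2)) → ℂ}
    {j : Option (Fin (d - 2))} : boundedOrbit d (q ∘ some) (q none) (crit q j) ↔
      Bornology.IsBounded (Set.range fun n => critOrbit 0 n q j) := by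
  rw [boundedOrbit, Pca_eq_eval_poly hd]
  rfl

lemma mem_connLocus_iff {d : ℕ} (hd : 2 ≤ d) {q : Option (Fin (d - 2)) → ℂ} :
    (q ∘ some, q none) ∈ connLocus d ↔ q ∈ boundednessLocus (Fin (d - 2)) 0 := by
  constructor
  · rintro h (_ | i)
    · rw [← boundedOrbit_crit_iff hd]
      simpa [critPt, crit] using h ⟨0, by omega⟩
    · rw [← boundedOrbit_crit_iff hd]
      simpa [critPt, crit] using h ⟨i + 1, by omega⟩
  · intro h i
    obtain hi | hi := eq_or_ne (i : ℕ) 0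
    · simpa [critPt, crit, hi] using (boundedOrbit_crit_iff hd).2 (h none)
    · simpa [critPt, crit, hi] using (boundedOrbit_crit_iff hd).2 (h (some ⟨i - 1, by omega⟩))

lemma connLocus_eq_image {d : ℕ} (hd : 2 ≤ d) : connLocus d =
    (fun q => (q ∘ some, q none)) '' boundednessLocus (Fin (d - 2)) 0 := by
  refine Set.Subset.antisymm (fun p hp => ?_)
    (Set.image_subset_iff.2 fun q => (mem_connLocus_iff hd).2)
  exact ⟨fun j => j.elim p.2 p.1, (mem_connLocus_iff hd).1 hp, rfl⟩

end Translation

end CriticalFamily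

theorem stmt4_general (d : ℕ) (hd : 2 ≤ d) :
    IsCompact (connLocus d) ∧ IsConnected (connLocus d) := by
  have cont : Continuous fun q : Option (Fin (d - 2)) → ℂ => (q ∘ some, q none) := by fun_prop
  rw [CriticalFamily.connLocus_eq_image hd]
  exact ⟨(CriticalFamily.isCompact_boundednessLocus _ 0).image cont,
    (CriticalFamily.isConnected_boundednessLocus _ 0).image _ cont.continuousOn⟩

/-- The connectedness locus `C_d` is a compact connected subset of `ℂ^{d-1}`. -/
theorem stmt4 (d : ℕ) (hd : 3 ≤ d) :
    IsCompact (connLocus d) ∧ IsConnected (connLocus d) :=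
  stmt4_general d (by omega)
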